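/- arXiv:2212.10871 — 3 statements merged into one kernel-verified Lean document; each statement's English description precedes it below -/
import Mathlib

section
/- Let (p_k)_{k≥0} be a critical offspring distribution with span 1, variance σ² ∈ (0,∞), and ∑_{k≥0} k^{2+δ} p_k < ∞ for some δ ∈ (0,1]. Then there exist a Δ-domain Δ and an analytic function Y on Δ with Y(z) = ∑_{n≥1} q_n z^n for |z| < 1 and |Y(z)| < 1 for all z ∈ Δ, such that, with implied constants uniform over z ∈ Δ: Φ(Y(z)) = 1 + O(|1−z|^{1/2}); Φ′(Y(z)) = 1 + O(|1−z|^{1/2}); Φ″(Y(z)) = σ² + O(|1−z|^{δ/2}); and for each fixed integer m ≥ 3, Φ^{(m)}(Y(z)) = O(|1−z|^{δ/2 + 1 − m/2}), where Φ^{(m)} denotes the m-th complex derivative of Φ on the open unit disc. -/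
/-- A Δ-domain: `{z : |z| < R, z ≠ 1, |arg(z−1)| > θ}`. -/
def deltaDom (R θ : ℝ) : Set ℂ :=
  {z : ℂ | ‖z‖ < R ∧ z ≠ 1 ∧ θ < |Complex.arg (z - 1)|}

/-- The offspring pgf, as a function on the complex unit disc. -/
noncomputable def pgfC (p : ℕ → ℝ) : ℂ → ℂ := fun w => ∑' k : ℕ, (p k : ℂ) * w ^ k

open Filter Topology Set

lemma summable_descFactorial_mul_pow_sub {p : ℕ → ℝ} (hp : ∀ k, 0 ≤ p k) (hp1 : ∀ k, p k ≤ 1)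
    (m : ℕ) {x : ℝ} (hx0 : 0 ≤ x) (hx1 : x < 1) :
    Summable fun k : ℕ => (k.descFactorial m : ℝ) * p k * x ^ (k - m) := by
  rw [← summable_nat_add_iff m]
  refine Summable.of_nonneg_of_le (fun k => ?_) (fun k => ?_)
    (summable_descFactorial_mul_geometric_of_norm_lt_one (R := ℝ) m (r := x)
      (by rwa [Real.norm_of_nonneg hx0]))
  · have := hp (k + m)
    positivity
  · rw [Nat.add_sub_cancel]
    have h1 : ((k + m).descFactorial m : ℝ) * p (k + m) ≤ ((k + m).descFactorial m : ℝ) :=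
      mul_le_of_le_one_right (by positivity) (hp1 _)
    gcongr

lemma hasDerivAt_tsum_descFactorial {p : ℕ → ℝ} (hp : ∀ k, 0 ≤ p k) (hp1 : ∀ k, p k ≤ 1)
    (m : ℕ) {w : ℂ} (hw : ‖w‖ < 1) :
    HasDerivAt (fun w : ℂ => ∑' k : ℕ, ((k.descFactorial m : ℝ) * p k : ℂ) * w ^ (k - m))
      (∑' k : ℕ, ((k.descFactorial (m + 1) : ℝ) * p k : ℂ) * w ^ (k - (m + 1))) w := by
  obtain ⟨x, hwx, hx1⟩ := exists_between hw
  have hx0 : 0 ≤ x := (norm_nonneg w).trans hwx.le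
  have hsum := summable_descFactorial_mul_pow_sub hp hp1 (m + 1) hx0 hx1
  refine hasDerivAt_tsum_of_isPreconnected (𝕜 := ℂ) (F := ℂ)
    (g := fun (k : ℕ) (w : ℂ) => ((k.descFactorial m : ℝ) * p k : ℂ) * w ^ (k - m))
    (g' := fun (k : ℕ) (w : ℂ) =>
      ((k.descFactorial (m + 1) : ℝ) * p k : ℂ) * w ^ (k - (m + 1)))
    (t := Metric.ball (0 : ℂ) x) (y₀ := w) hsum Metric.isOpen_ball
    (convex_ball _ _).isPreconnected (fun k y _ => ?_) (fun k y hy => ?_)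
    (by simpa using hwx) ?_ (by simpa using hwx)
  · have h := (hasDerivAt_pow (k - m) y).const_mul ((k.descFactorial m : ℝ) * p k : ℂ)
    have e : ((k.descFactorial m : ℝ) * p k : ℂ) * ((k - m : ℕ) * y ^ (k - m - 1)) =
        ((k.descFactorial (m + 1) : ℝ) * p k : ℂ) * y ^ (k - (m + 1)) := by
      rw [Nat.descFactorial_succ, Nat.sub_sub]
      push_cast
      ring
    rwa [e] at h
  · have hy' : ‖y‖ ≤ x := by
      have := Metric.mem_ball.1 hy
      rw [dist_zero_right] at this
      exact this.le
    rw [norm_mul, norm_pow, norm_mul, Complex.norm_real, Complex.norm_real,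
      Real.norm_of_nonneg (hp k), Real.norm_of_nonneg (by positivity)]
    have := hp k
    gcongr
  · refine Summable.of_norm ?_
    refine (summable_descFactorial_mul_pow_sub hp hp1 m (norm_nonneg w) hw).congr fun k => ?_
    rw [norm_mul, norm_pow, norm_mul, Complex.norm_real, Complex.norm_real,
      Real.norm_of_nonneg (hp k), Real.norm_of_nonneg (by positivity)]

lemma iteratedDeriv_pgfC {p : ℕ → ℝ} (hp : ∀ k, 0 ≤ p k) (hp1 : ∀ k, p k ≤ 1) (m : ℕ) :
    ∀ {w : ℂ}, ‖w‖ < 1 → iteratedDeriv m (pgfC p) w =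
      ∑' k : ℕ, ((k.descFactorial m : ℝ) * p k : ℂ) * w ^ (k - m) := by
  induction m with
  | zero =>
    intro w _
    simp [pgfC]
  | succ m ih =>
    intro w hw
    rw [iteratedDeriv_succ, ← (hasDerivAt_tsum_descFactorial hp hp1 m hw).deriv]
    refine EventuallyEq.deriv_eq ?_
    have : ∀ᶠ v : ℂ in 𝓝 w, ‖v‖ < 1 := continuous_norm.continuousAt.eventually_lt_const hw
    filter_upwards [this] with v hv using ih hv

lemma norm_geom_sum₂_le {a b : ℂ} {x : ℝ} (ha : ‖a‖ ≤ x) (hb : ‖b‖ ≤ 1) (k : ℕ) :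
    ‖∑ i ∈ Finset.range k, a ^ i * b ^ (k - 1 - i)‖ ≤ ∑ i ∈ Finset.range k, x ^ i := by
  refine (norm_sum_le _ _).trans (Finset.sum_le_sum fun i _ => ?_)
  rw [norm_mul, norm_pow, norm_pow]
  have h1 : ‖b‖ ^ (k - 1 - i) ≤ 1 := pow_le_one₀ (norm_nonneg _) hb
  have h2 : ‖a‖ ^ i ≤ x ^ i := by gcongr
  calc ‖a‖ ^ i * ‖b‖ ^ (k - 1 - i) ≤ ‖a‖ ^ i * 1 := by gcongr
    _ ≤ x ^ i := by rwa [mul_one]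

lemma sum_pow_le_card {x : ℝ} (hx0 : 0 ≤ x) (hx1 : x ≤ 1) (k : ℕ) :
    ∑ i ∈ Finset.range k, x ^ i ≤ k := by
  have := Finset.sum_le_sum (s := Finset.range k) fun i _ => pow_le_one₀ (n := i) hx0 hx1
  simpa using this

lemma summable_mul_pow {p : ℕ → ℝ} (hp : ∀ k, 0 ≤ p k) (hs : Summable p) {w : ℂ}
    (hw : ‖w‖ ≤ 1) : Summable fun k : ℕ => (p k : ℂ) * w ^ k := by
  refine Summable.of_norm_bounded hs fun k => ?_
  rw [norm_mul, norm_pow, Complex.norm_real, Real.norm_of_nonneg (hp k)]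
  exact mul_le_of_le_one_right (hp k) (pow_le_one₀ (norm_nonneg _) hw)

/-- Divided differences of `pgfC p` with one point in the disc of radius `x`. -/
lemma norm_pgfC_sub_le {p : ℕ → ℝ} (hp : ∀ k, 0 ≤ p k) (hs : Summable p)
    (hs1 : Summable fun k : ℕ => (k : ℝ) * p k) {x : ℝ} (hx1 : x ≤ 1) {a b : ℂ}
    (ha : ‖a‖ ≤ x) (hb : ‖b‖ ≤ 1) :
    ‖pgfC p a - pgfC p b‖ ≤ (∑' k, (∑ i ∈ Finset.range k, x ^ i) * p k) * ‖a - b‖ := by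
  have hx0 : 0 ≤ x := (norm_nonneg a).trans ha
  have hsum : Summable fun k => (∑ i ∈ Finset.range k, x ^ i) * p k := by
    refine Summable.of_nonneg_of_le (fun k => ?_) (fun k => ?_) hs1
    · have := hp k
      positivity
    · exact mul_le_mul_of_nonneg_right (sum_pow_le_card hx0 hx1 k) (hp k)
  rw [pgfC, pgfC, ← (summable_mul_pow hp hs (ha.trans hx1)).tsum_sub (summable_mul_pow hp hs hb),
    ← tsum_mul_right]
  refine tsum_of_norm_bounded (hsum.mul_right _).hasSum fun k => ?_
  rw [← mul_sub, ← geom_sum₂_mul, norm_mul, norm_mul, Complex.norm_real,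
    Real.norm_of_nonneg (hp k)]
  have := norm_geom_sum₂_le ha hb k
  have := hp k
  calc p k * (‖∑ i ∈ Finset.range k, a ^ i * b ^ (k - 1 - i)‖ * ‖a - b‖)
      ≤ p k * ((∑ i ∈ Finset.range k, x ^ i) * ‖a - b‖) := by gcongr
    _ = _ := by ring

lemma tsum_geom_mul_lt_one {p : ℕ → ℝ} (hp : ∀ k, 0 ≤ p k)
    (hs1 : HasSum (fun k : ℕ => (k : ℝ) * p k) 1) {n : ℕ} (hn : 2 ≤ n) (hpn : 0 < p n) {x : ℝ}
    (hx0 : 0 ≤ x) (hx1 : x < 1) :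
    (∑' k, (∑ i ∈ Finset.range k, x ^ i) * p k) < 1 := by
  have hle : ∀ k, (∑ i ∈ Finset.range k, x ^ i) * p k ≤ k * p k := fun k =>
    mul_le_mul_of_nonneg_right (sum_pow_le_card hx0 hx1.le k) (hp k)
  have hsum : Summable fun k => (∑ i ∈ Finset.range k, x ^ i) * p k := by
    refine Summable.of_nonneg_of_le (fun k => ?_) hle hs1.summable
    have := hp k
    positivity
  rw [← hs1.tsum_eq]
  refine hsum.tsum_lt_tsum hle (i := n) ?_ hs1.summable
  refine mul_lt_mul_of_pos_right ?_ hpn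
  have h : ∑ i ∈ Finset.range n, x ^ i < ∑ i ∈ Finset.range n, (1 : ℝ) :=
    Finset.sum_lt_sum (fun i _ => pow_le_one₀ hx0 hx1.le)
      ⟨1, Finset.mem_range.2 (by omega), by simpa using hx1⟩
  simpa using h

lemma norm_one_sub_pow_le_mul {w : ℂ} (hw : ‖w‖ ≤ 1) (i : ℕ) : ‖1 - w ^ i‖ ≤ i * ‖1 - w‖ := by
  rw [← mul_neg_geom_sum, norm_mul, mul_comm]
  gcongr
  have := norm_geom_sum₂_le (x := 1) hw (b := 1) (by simp) i
  simpa using this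

lemma norm_one_sub_pow_le_rpow {δ : ℝ} (hδ0 : 0 < δ) (hδ1 : δ ≤ 1) {w : ℂ} (hw : ‖w‖ ≤ 1)
    {i k : ℕ} (hik : i ≤ k) : ‖1 - w ^ i‖ ≤ 2 * ((k : ℝ) ^ δ * ‖1 - w‖ ^ δ) := by
  rw [← Real.mul_rpow (by positivity) (norm_nonneg _)]
  set t := (k : ℝ) * ‖1 - w‖ with ht
  have ht0 : 0 ≤ t := by positivity
  rcases le_total t 1 with h | h
  · have h1 : ‖1 - w ^ i‖ ≤ t := (norm_one_sub_pow_le_mul hw i).trans (by rw [ht]; gcongr)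
    have h2 : t ≤ t ^ δ := by
      rcases ht0.eq_or_lt with h0 | h0
      · rw [← h0, Real.zero_rpow hδ0.ne']
      · simpa using Real.rpow_le_rpow_of_exponent_ge h0 h hδ1
    linarith
  · have h1 : ‖1 - w ^ i‖ ≤ 2 := by
      refine (norm_sub_le _ _).trans ?_
      rw [norm_one, norm_pow]
      have := pow_le_one₀ (n := i) (norm_nonneg w) hw
      linarith
    have h2 : 1 ≤ t ^ δ := Real.one_le_rpow h hδ0.le
    linarith

lemma norm_pow_sub_one_add_le {δ : ℝ} (hδ0 : 0 < δ) (hδ1 : δ ≤ 1) {w : ℂ} (hw : ‖w‖ ≤ 1)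
    (n : ℕ) : ‖w ^ n - 1 + n * (1 - w)‖ ≤ 2 * (n * (n : ℝ) ^ δ) * (‖1 - w‖ * ‖1 - w‖ ^ δ) := by
  have h : w ^ n - 1 + n * (1 - w) = (1 - w) * ∑ i ∈ Finset.range n, (1 - w ^ i) := by
    rw [Finset.sum_sub_distrib, mul_sub (1 - w), mul_neg_geom_sum]
    simp
    ring
  rw [h, norm_mul]
  have h2 : ‖∑ i ∈ Finset.range n, (1 - w ^ i)‖ ≤ n * (2 * ((n : ℝ) ^ δ * ‖1 - w‖ ^ δ)) := by
    refine (norm_sum_le _ _).trans ?_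
    have := Finset.sum_le_sum (s := Finset.range n) fun i hi =>
      norm_one_sub_pow_le_rpow hδ0 hδ1 hw (Finset.mem_range.1 hi).le
    simpa using this
  calc _ ≤ ‖1 - w‖ * (n * (2 * ((n : ℝ) ^ δ * ‖1 - w‖ ^ δ))) := by gcongr
    _ = _ := by ring

/-- The second-order Taylor remainder of `w ^ k` at `1` is Lipschitz with a small constant. -/
lemma norm_taylor_pow_sub_le {δ : ℝ} (hδ0 : 0 < δ) (hδ1 : δ ≤ 1) {a b : ℂ} {M : ℝ}
    (ha : ‖a‖ ≤ 1) (hb : ‖b‖ ≤ 1) (haM : ‖1 - a‖ ≤ M) (hbM : ‖1 - b‖ ≤ M) (k : ℕ) :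
    ‖(a ^ k - (1 - k * (1 - a) + k * (k - 1) / 2 * (1 - a) ^ 2)) -
      (b ^ k - (1 - k * (1 - b) + k * (k - 1) / 2 * (1 - b) ^ 2))‖ ≤
      2 * ((k : ℝ) ^ (2 + δ)) * (M * M ^ δ) * ‖a - b‖ := by
  have hM : 0 ≤ M := (norm_nonneg _).trans haM
  have hconv : Convex ℝ (Metric.closedBall (0 : ℂ) 1 ∩ Metric.closedBall (1 : ℂ) M) :=
    (convex_closedBall _ _).inter (convex_closedBall _ _)
  refine hconv.norm_image_sub_le_of_norm_hasDerivWithin_le (𝕜 := ℂ)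
    (f := fun w : ℂ => w ^ k - (1 - k * (1 - w) + k * (k - 1) / 2 * (1 - w) ^ 2))
    (f' := fun w : ℂ => k * (w ^ (k - 1) - 1 + (k - 1) * (1 - w)))
    (fun w _ => ?_) (fun w hw => ?_) ?_ ?_
  · refine HasDerivAt.hasDerivWithinAt ?_
    have h1 : HasDerivAt (fun w : ℂ => 1 - w) (-1) w := (hasDerivAt_id w).const_sub 1
    have h := (hasDerivAt_pow k w).fun_sub (((h1.const_mul (k : ℂ)).const_sub 1).fun_add
      ((h1.fun_pow 2).const_mul ((k : ℂ) * (k - 1) / 2)))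
    convert h using 1
    norm_num
    ring
  · have hw1 : ‖w‖ ≤ 1 := by simpa using hw.1
    have hwM : ‖1 - w‖ ≤ M := by
      have := hw.2
      rwa [Metric.mem_closedBall, dist_comm, dist_eq_norm] at this
    rcases Nat.eq_zero_or_pos k with rfl | hk
    · simp only [Nat.cast_zero, zero_mul, norm_zero]
      positivity
    obtain ⟨n, rfl⟩ : ∃ n, k = n + 1 := ⟨k - 1, by omega⟩
    have h := norm_pow_sub_one_add_le hδ0 hδ1 hw1 n
    rw [norm_mul, Complex.norm_natCast]
    have e : w ^ (n + 1 - 1) - 1 + (((n + 1 : ℕ) : ℂ) - 1) * (1 - w) =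
        w ^ n - 1 + n * (1 - w) := by simp
    rw [e]
    have hpow : ((n + 1 : ℕ) : ℝ) ^ (2 + δ) =
        ((n + 1 : ℕ) : ℝ) * (((n + 1 : ℕ) : ℝ) * ((n + 1 : ℕ) : ℝ) ^ δ) := by
      rw [Real.rpow_add (by positivity), Real.rpow_two]
      ring
    rw [hpow]
    have hn : (n : ℝ) ≤ ((n + 1 : ℕ) : ℝ) := by simp
    calc ((n + 1 : ℕ) : ℝ) * ‖w ^ n - 1 + n * (1 - w)‖
        ≤ ((n + 1 : ℕ) : ℝ) * (2 * (n * (n : ℝ) ^ δ) * (‖1 - w‖ * ‖1 - w‖ ^ δ)) := by gcongr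
      _ ≤ ((n + 1 : ℕ) : ℝ) * (2 * (((n + 1 : ℕ) : ℝ) * ((n + 1 : ℕ) : ℝ) ^ δ) *
            (M * M ^ δ)) := by gcongr
      _ = _ := by ring
  · exact ⟨by simpa using hb, by rwa [Metric.mem_closedBall, dist_comm, dist_eq_norm]⟩
  · exact ⟨by simpa using ha, by rwa [Metric.mem_closedBall, dist_comm, dist_eq_norm]⟩

lemma natCast_rpow_two_add {δ : ℝ} (hδ0 : 0 < δ) (k : ℕ) :
    (k : ℝ) ^ (2 + δ) = (k : ℝ) ^ 2 * (k : ℝ) ^ δ := by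
  rw [Real.rpow_add_of_nonneg (by positivity) (by norm_num) hδ0.le, Real.rpow_two]

lemma sq_le_natCast_rpow_two_add {δ : ℝ} (hδ0 : 0 < δ) (k : ℕ) :
    (k : ℝ) ^ 2 ≤ (k : ℝ) ^ (2 + δ) := by
  rcases Nat.eq_zero_or_pos k with rfl | hk
  · rw [Nat.cast_zero, Real.zero_rpow (by linarith)]
    norm_num
  · rw [natCast_rpow_two_add hδ0]
    have : (1 : ℝ) ≤ k := by exact_mod_cast hk
    exact le_mul_of_one_le_right (by positivity) (Real.one_le_rpow this hδ0.le)

lemma summable_mul_sub_one_mul {p : ℕ → ℝ} (hp : ∀ k, 0 ≤ p k) {δ : ℝ} (hδ0 : 0 < δ)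
    (hmom : Summable (fun k : ℕ => (k : ℝ) ^ ((2:ℝ) + δ) * p k)) :
    Summable fun k : ℕ => (k : ℝ) * ((k : ℝ) - 1) * p k := by
  refine Summable.of_norm_bounded hmom fun k => ?_
  have h0 : 0 ≤ (k : ℝ) * ((k : ℝ) - 1) := by
    rcases Nat.eq_zero_or_pos k with rfl | hk
    · simp
    · have : (1 : ℝ) ≤ k := by exact_mod_cast hk
      exact mul_nonneg (by positivity) (by linarith)
  rw [Real.norm_of_nonneg (mul_nonneg h0 (hp k))]
  have := sq_le_natCast_rpow_two_add hδ0 k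
  have hk : (0 : ℝ) ≤ k := by positivity
  exact mul_le_mul_of_nonneg_right (by nlinarith) (hp k)

/-- The second-order Taylor remainder of a critical pgf at `1` is Lipschitz, with a constant
vanishing at `1`. -/
lemma norm_pgfC_taylor_sub_le {p : ℕ → ℝ} (hp : ∀ k, 0 ≤ p k) (hs : HasSum p 1)
    (hs1 : HasSum (fun k : ℕ => (k : ℝ) * p k) 1) {δ : ℝ} (hδ0 : 0 < δ) (hδ1 : δ ≤ 1)
    (hmom : Summable (fun k : ℕ => (k : ℝ) ^ ((2:ℝ) + δ) * p k)) {a b : ℂ} {M : ℝ}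
    (ha : ‖a‖ ≤ 1) (hb : ‖b‖ ≤ 1) (haM : ‖1 - a‖ ≤ M) (hbM : ‖1 - b‖ ≤ M) :
    ‖(pgfC p a - a - ((∑' k : ℕ, (k : ℝ) * ((k : ℝ) - 1) * p k) / 2 : ℝ) * (1 - a) ^ 2) -
      (pgfC p b - b - ((∑' k : ℕ, (k : ℝ) * ((k : ℝ) - 1) * p k) / 2 : ℝ) * (1 - b) ^ 2)‖ ≤
      2 * (∑' k : ℕ, (k : ℝ) ^ ((2:ℝ) + δ) * p k) * (M * M ^ δ) * ‖a - b‖ := by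
  set S := ∑' k : ℕ, (k : ℝ) * ((k : ℝ) - 1) * p k with hS
  have hsS : HasSum (fun k : ℕ => (k : ℝ) * ((k : ℝ) - 1) * p k) S :=
    (summable_mul_sub_one_mul hp hδ0 hmom).hasSum
  have key : ∀ w : ℂ, ‖w‖ ≤ 1 → HasSum (fun k : ℕ => (p k : ℂ) *
      (w ^ k - (1 - k * (1 - w) + k * (k - 1) / 2 * (1 - w) ^ 2)))
      (pgfC p w - w - (S / 2 : ℝ) * (1 - w) ^ 2) := by
    intro w hw
    have e0 : HasSum (fun k : ℕ => (p k : ℂ) * w ^ k) (pgfC p w) :=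
      (summable_mul_pow hp hs.summable hw).hasSum
    have e1 := Complex.hasSum_ofReal.2 hs
    have e2 := (Complex.hasSum_ofReal.2 hs1).mul_right (1 - w)
    have e3 := (Complex.hasSum_ofReal.2 hsS).mul_right ((1 - w) ^ 2 / 2)
    have := e0.sub ((e1.sub e2).add e3)
    have ev : pgfC p w - w - (S / 2 : ℝ) * (1 - w) ^ 2 =
        pgfC p w - (((1 : ℝ) : ℂ) - ((1 : ℝ) : ℂ) * (1 - w) + S * ((1 - w) ^ 2 / 2)) := by
      push_cast
      ring
    rw [ev]
    refine (congrArg (fun f => HasSum f _) (funext fun k => ?_)).mp this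
    push_cast
    ring
  rw [← ((key a ha).sub (key b hb)).tsum_eq, mul_assoc, mul_comm (2 : ℝ), mul_assoc,
    ← tsum_mul_right]
  refine tsum_of_norm_bounded (hmom.mul_right _).hasSum fun k => ?_
  rw [← mul_sub, norm_mul, Complex.norm_real, Real.norm_of_nonneg (hp k)]
  have := norm_taylor_pow_sub_le hδ0 hδ1 ha hb haM hbM k
  have := hp k
  calc p k * _ ≤ p k * (2 * ((k : ℝ) ^ (2 + δ)) * (M * M ^ δ) * ‖a - b‖) := by gcongr
    _ = _ := by ring

lemma norm_iteratedDeriv_two_pgfC_sub_le {p : ℕ → ℝ} (hp : ∀ k, 0 ≤ p k) (hp1 : ∀ k, p k ≤ 1)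
    {δ : ℝ} (hδ0 : 0 < δ) (hδ1 : δ ≤ 1)
    (hmom : Summable (fun k : ℕ => (k : ℝ) ^ ((2:ℝ) + δ) * p k)) {w : ℂ} (hw : ‖w‖ < 1) :
    ‖iteratedDeriv 2 (pgfC p) w - ((∑' k : ℕ, (k : ℝ) * ((k : ℝ) - 1) * p k : ℝ) : ℂ)‖ ≤
      2 * (∑' k : ℕ, (k : ℝ) ^ ((2:ℝ) + δ) * p k) * ‖1 - w‖ ^ δ := by
  have hsS := Complex.hasSum_ofReal.2 (summable_mul_sub_one_mul hp hδ0 hmom).hasSum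
  have hdesc : ∀ k : ℕ, (k.descFactorial 2 : ℝ) = k * (k - 1) := by
    intro k
    rcases Nat.eq_zero_or_pos k with rfl | hk
    · simp
    · rw [Nat.descFactorial_succ, Nat.descFactorial_one, Nat.cast_mul, Nat.cast_pred hk, mul_comm]
  have hs2 : Summable fun k : ℕ => ((k.descFactorial 2 : ℝ) * p k : ℂ) * w ^ (k - 2) := by
    refine Summable.of_norm ?_
    refine (summable_descFactorial_mul_pow_sub hp hp1 2 (norm_nonneg w) hw).congr fun k => ?_
    rw [norm_mul, norm_pow, norm_mul, Complex.norm_real, Complex.norm_real,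
      Real.norm_of_nonneg (hp k), Real.norm_of_nonneg (by positivity)]
  rw [iteratedDeriv_pgfC hp hp1 2 hw, ← hsS.tsum_eq, ← hs2.tsum_sub hsS.summable, mul_assoc,
    mul_comm (2 : ℝ), mul_assoc, ← tsum_mul_right]
  refine tsum_of_norm_bounded (hmom.mul_right _).hasSum fun k => ?_
  have e : ((k.descFactorial 2 : ℝ) * p k : ℂ) * w ^ (k - 2) -
      (((k : ℝ) * ((k : ℝ) - 1) * p k : ℝ) : ℂ) =
      -(((k.descFactorial 2 : ℝ) * p k : ℝ) * (1 - w ^ (k - 2))) := by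
    rw [← hdesc]
    push_cast
    ring
  rw [e, norm_neg, norm_mul, Complex.norm_real, Real.norm_of_nonneg
    (mul_nonneg (by positivity) (hp k))]
  have h1 := norm_one_sub_pow_le_rpow hδ0 hδ1 hw.le (Nat.sub_le k 2)
  have h2 : (k.descFactorial 2 : ℝ) ≤ (k : ℝ) ^ 2 := by
    exact_mod_cast Nat.descFactorial_le_pow k 2
  have := hp k
  rw [natCast_rpow_two_add hδ0]
  calc (k.descFactorial 2 : ℝ) * p k * ‖1 - w ^ (k - 2)‖
      ≤ (k : ℝ) ^ 2 * p k * (2 * ((k : ℝ) ^ δ * ‖1 - w‖ ^ δ)) := by gcongr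
    _ = _ := by ring

lemma exists_rpow_mul_exp_neg_le {α : ℝ} (hα : 0 ≤ α) :
    ∃ C : ℝ, 0 ≤ C ∧ ∀ t : ℝ, 0 ≤ t → t ^ α * Real.exp (-t) ≤ C := by
  obtain ⟨n, hn⟩ := exists_nat_ge α
  refine ⟨n.factorial * Real.exp 1, by positivity, fun t ht => ?_⟩
  have h1 : t ^ α ≤ (t + 1) ^ n := by
    rw [← Real.rpow_natCast]
    exact (Real.rpow_le_rpow ht (by linarith) hα).trans
      (Real.rpow_le_rpow_of_exponent_le (by linarith) hn)
  have h2 := Real.pow_div_factorial_le_exp (t + 1) (by linarith) n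
  rw [div_le_iff₀ (by positivity)] at h2
  calc t ^ α * Real.exp (-t) ≤ (Real.exp (t + 1) * n.factorial) * Real.exp (-t) := by
        gcongr; exact h1.trans h2
    _ = n.factorial * (Real.exp (t + 1) * Real.exp (-t)) := by ring
    _ = _ := by rw [← Real.exp_add]; ring_nf

/-- Higher derivatives of the pgf blow up at most like a power of the distance to the circle. -/
lemma exists_norm_iteratedDeriv_pgfC_le {p : ℕ → ℝ} (hp : ∀ k, 0 ≤ p k) (hp1 : ∀ k, p k ≤ 1)
    {δ : ℝ} (hδ1 : δ ≤ 1)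
    (hmom : Summable (fun k : ℕ => (k : ℝ) ^ ((2:ℝ) + δ) * p k)) {m : ℕ} (hm : 3 ≤ m) :
    ∃ C : ℝ, 0 ≤ C ∧ ∀ w : ℂ, ‖w‖ < 1 →
      ‖iteratedDeriv m (pgfC p) w‖ ≤ C * (1 - ‖w‖) ^ (2 + δ - m) := by
  have hm' : (3 : ℝ) ≤ m := by exact_mod_cast hm
  obtain ⟨C, hC0, hC⟩ := exists_rpow_mul_exp_neg_le (α := m - (2 + δ)) (by linarith)
  have hT0 : 0 ≤ ∑' k : ℕ, (k : ℝ) ^ ((2:ℝ) + δ) * p k :=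
    tsum_nonneg fun k => mul_nonneg (by positivity) (hp k)
  refine ⟨(∑' k : ℕ, (k : ℝ) ^ ((2:ℝ) + δ) * p k) * (C * Real.exp m), by positivity,
    fun w hw => ?_⟩
  rw [iteratedDeriv_pgfC hp hp1 m hw, mul_assoc, ← tsum_mul_right]
  refine tsum_of_norm_bounded (hmom.mul_right _).hasSum fun k => ?_
  have hpk := hp k
  rw [norm_mul, norm_pow, norm_mul, Complex.norm_real, Complex.norm_real,
    Real.norm_of_nonneg (hp k), Real.norm_of_nonneg (by positivity)]
  set x := ‖w‖ with hx
  have hx0 : 0 ≤ x := norm_nonneg w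
  have hy0 : 0 < 1 - x := by linarith
  rcases lt_or_ge k m with hkm | hkm
  · rw [Nat.descFactorial_eq_zero_iff_lt.2 hkm]
    simp only [Nat.cast_zero, zero_mul]
    positivity
  have hk0 : (0 : ℝ) < k := by
    have : 0 < k := by omega
    exact_mod_cast this
  have h1 : (k.descFactorial m : ℝ) ≤ (k : ℝ) ^ (2 + δ) * (k : ℝ) ^ ((m : ℝ) - (2 + δ)) := by
    rw [← Real.rpow_add hk0, add_sub_cancel, Real.rpow_natCast]
    exact_mod_cast Nat.descFactorial_le_pow k m
  have h2 : x ^ (k - m) ≤ Real.exp m * Real.exp (-(k * (1 - x))) := by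
    have h3 : x ≤ Real.exp (-(1 - x)) := by
      have := Real.add_one_le_exp (-(1 - x))
      linarith
    calc x ^ (k - m) ≤ Real.exp (-(1 - x)) ^ (k - m) := by gcongr
      _ = Real.exp (((k - m : ℕ) : ℝ) * (-(1 - x))) := by rw [Real.exp_nat_mul]
      _ ≤ Real.exp (m + -(k * (1 - x))) := by
        rw [Real.exp_le_exp, Nat.cast_sub hkm]
        nlinarith
      _ = _ := Real.exp_add _ _
  have h4 : (k : ℝ) ^ ((m : ℝ) - (2 + δ)) * Real.exp (-(k * (1 - x))) ≤
      C * (1 - x) ^ (2 + δ - m) := by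
    have h5 := hC (k * (1 - x)) (by positivity)
    rw [Real.mul_rpow hk0.le hy0.le] at h5
    have h6 : (1 - x) ^ ((m : ℝ) - (2 + δ)) * (1 - x) ^ (2 + δ - m) = 1 := by
      rw [← Real.rpow_add hy0]
      simp
    calc _ = ((k : ℝ) ^ ((m : ℝ) - (2 + δ)) * (1 - x) ^ ((m : ℝ) - (2 + δ)) *
          Real.exp (-(k * (1 - x)))) * (1 - x) ^ (2 + δ - m) := by
          linear_combination (-(k : ℝ) ^ ((m : ℝ) - (2 + δ)) * Real.exp (-(k * (1 - x)))) * h6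
      _ ≤ _ := by gcongr
  calc (k.descFactorial m : ℝ) * p k * x ^ (k - m)
      ≤ ((k : ℝ) ^ (2 + δ) * (k : ℝ) ^ ((m : ℝ) - (2 + δ))) * p k *
        (Real.exp m * Real.exp (-(k * (1 - x)))) := by gcongr
    _ = (k : ℝ) ^ (2 + δ) * p k * Real.exp m *
        ((k : ℝ) ^ ((m : ℝ) - (2 + δ)) * Real.exp (-(k * (1 - x)))) := by ring
    _ ≤ (k : ℝ) ^ (2 + δ) * p k * Real.exp m * (C * (1 - x) ^ (2 + δ - m)) := by gcongr
    _ = _ := by ring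

lemma exists_local_branch {Φ : ℂ → ℂ} (hd : DifferentiableOn ℂ Φ (Metric.ball 0 1))
    (h0 : Φ 0 ≠ 0) {z₀ w₀ : ℂ} (hw : w₀ ∈ Metric.ball (0 : ℂ) 1) (h : w₀ = z₀ * Φ w₀)
    (hne : 1 - z₀ * deriv Φ w₀ ≠ 0) :
    ∃ g : ℂ → ℂ, DifferentiableAt ℂ g z₀ ∧ g z₀ = w₀ ∧ ∀ᶠ z in 𝓝 z₀, g z = z * Φ (g z) := by
  have hΦw : Φ w₀ ≠ 0 := by
    intro h1
    rw [h1, mul_zero] at h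
    exact h0 (h ▸ h1)
  have han : AnalyticAt ℂ Φ w₀ := hd.analyticAt (Metric.isOpen_ball.mem_nhds hw)
  have hψ := (hasStrictDerivAt_id w₀).fun_div han.hasStrictDerivAt hΦw
  simp only [id] at hψ
  have hval : w₀ / Φ w₀ = z₀ := by
    rw [div_eq_iff hΦw]
    exact h
  have hder : (1 * Φ w₀ - w₀ * deriv Φ w₀) / Φ w₀ ^ 2 ≠ 0 := by
    refine div_ne_zero ?_ (pow_ne_zero _ hΦw)
    have : 1 * Φ w₀ - w₀ * deriv Φ w₀ = Φ w₀ * (1 - z₀ * deriv Φ w₀) := by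
      linear_combination (-deriv Φ w₀) * h
    rw [this]
    exact mul_ne_zero hΦw hne
  have hg := (hψ.to_localInverse hder).hasDerivAt
  have hr := hψ.eventually_right_inverse hder
  have hg0 : hψ.localInverse _ _ _ hder (w₀ / Φ w₀) = w₀ :=
    HasStrictFDerivAt.localInverse_apply_image _
  rw [hval] at hg hr hg0
  refine ⟨_, hg.differentiableAt, hg0, ?_⟩
  have hc : ContinuousAt (fun z => Φ (hψ.localInverse _ _ _ hder z)) z₀ := by
    refine ContinuousAt.comp ?_ hg.continuousAt
    rw [hg0]
    exact han.continuousAt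
  have hc0 : Φ (hψ.localInverse _ _ _ hder z₀) ≠ 0 := by rwa [hg0]
  filter_upwards [hr, hc.eventually_ne hc0] with z hz1 hz2
  rwa [div_eq_iff hz2] at hz1

lemma HasDerivAt.ne_zero_of_expanding {f : ℂ → ℂ} {f' a : ℂ} (hf : HasDerivAt f f' a) {c : ℝ}
    (hc : 0 < c) (h : ∀ᶠ b in 𝓝 a, c * ‖a - b‖ ≤ ‖f a - f b‖) : f' ≠ 0 := by
  rintro rfl
  rw [hasDerivAt_iff_isLittleO] at hf
  have h1 := hf.def (half_pos hc)
  obtain ⟨b, ⟨h2, h3⟩, h4⟩ := ((h1.and h).filter_mono nhdsWithin_le_nhds |>.and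
    (self_mem_nhdsWithin : ({a}ᶜ : Set ℂ) ∈ 𝓝[≠] a)).exists
  rw [smul_zero, sub_zero, ← norm_sub_rev a b, ← norm_sub_rev (f a)] at h2
  have : 0 < ‖a - b‖ := norm_pos_iff.2 (sub_ne_zero.2 (Ne.symm h4))
  nlinarith

/-- A holomorphic global branch of the solution of `w = z Φ(w)`, obtained from pointwise existence
and a quantitative uniqueness. -/
lemma exists_global_branch {Φ : ℂ → ℂ} (hd : DifferentiableOn ℂ Φ (Metric.ball 0 1))
    (h0 : Φ 0 ≠ 0) {U D : Set ℂ} (hU : IsOpen U) (hU1 : U ⊆ Metric.ball 0 1) (hD : IsOpen D)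
    (hinj : ∀ z ∈ D, ∀ a ∈ U, a = z * Φ a → ∃ c > 0, ∀ b ∈ U,
      c * ‖a - b‖ ≤ ‖(a - z * Φ a) - (b - z * Φ b)‖)
    (hex : ∀ z ∈ D, ∃ w ∈ U, w = z * Φ w) :
    ∃ Y : ℂ → ℂ, DifferentiableOn ℂ Y D ∧ ∀ z ∈ D, Y z ∈ U ∧ Y z = z * Φ (Y z) := by
  choose! Y hYU hY using hex
  refine ⟨Y, fun z hz => ?_, fun z hz => ⟨hYU z hz, hY z hz⟩⟩
  have huniq : ∀ z ∈ D, ∀ b ∈ U, b = z * Φ b → Y z = b := by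
    intro z hz b hb hbe
    obtain ⟨c, hc, h⟩ := hinj z hz _ (hYU z hz) (hY z hz)
    have h1 := h b hb
    rw [sub_eq_zero.2 (hY z hz), sub_eq_zero.2 hbe, sub_zero, norm_zero] at h1
    have h2 : ‖Y z - b‖ ≤ 0 := by
      have := norm_nonneg (Y z - b)
      nlinarith
    exact sub_eq_zero.1 (norm_le_zero_iff.1 h2)
  obtain ⟨c, hc, h⟩ := hinj z hz _ (hYU z hz) (hY z hz)
  have hdΦ : HasDerivAt Φ (deriv Φ (Y z)) (Y z) :=
    (hd.differentiableAt (Metric.isOpen_ball.mem_nhds (hU1 (hYU z hz)))).hasDerivAt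
  have hne : 1 - z * deriv Φ (Y z) ≠ 0 := by
    have hH : HasDerivAt (fun b => b - z * Φ b) (1 - z * deriv Φ (Y z)) (Y z) :=
      (hasDerivAt_id _).sub (hdΦ.const_mul z)
    exact hH.ne_zero_of_expanding hc (Filter.mem_of_superset (hU.mem_nhds (hYU z hz)) h)
  obtain ⟨g, hg, hg0, hge⟩ := exists_local_branch hd h0 (hU1 (hYU z hz)) (hY z hz) hne
  have hgU : ∀ᶠ v in 𝓝 z, g v ∈ U :=
    hg.continuousAt.eventually_mem (by rw [hg0]; exact hU.mem_nhds (hYU z hz))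
  have : Y =ᶠ[𝓝 z] g := by
    filter_upwards [hge, hgU, hD.mem_nhds hz] with v h1 h2 h3
    exact huniq v h3 _ h2 h1
  exact (hg.congr_of_eventuallyEq this).differentiableWithinAt

/-- A truncated cone at `1` pointing into the unit disc. -/
def truncCone (t : ℝ) : Set ℂ := {w : ℂ | ‖1 - w‖ < t ∧ ‖1 - w‖ < 4 * (1 - w).re}

lemma isOpen_truncCone (t : ℝ) : IsOpen (truncCone t) := by
  have h : Continuous fun w : ℂ => 1 - w := by fun_prop
  exact (isOpen_lt h.norm continuous_const).inter
    (isOpen_lt h.norm (continuous_const.mul (Complex.continuous_re.comp h)))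

lemma norm_one_sub_le_of_mem_truncCone {t : ℝ} (ht : t ≤ 1 / 32) {w : ℂ} (hw : w ∈ truncCone t) :
    ‖1 - w‖ / 8 ≤ 1 - ‖w‖ := by
  obtain ⟨h1, h2⟩ := hw
  have e : ‖w‖ ^ 2 = 1 - 2 * (1 - w).re + ‖1 - w‖ ^ 2 := by
    rw [Complex.sq_norm, Complex.sq_norm, Complex.normSq_apply, Complex.normSq_apply]
    simp
    ring
  set u := ‖1 - w‖
  have hu : 0 ≤ u := norm_nonneg _
  have : ‖w‖ ≤ 1 - u / 8 := abs_le_of_sq_le_sq' (by nlinarith) (by linarith) |>.2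
  linarith

lemma norm_le_one_of_mem_truncCone {t : ℝ} (ht : t ≤ 1 / 32) {w : ℂ} (hw : w ∈ truncCone t) :
    ‖w‖ ≤ 1 := by
  have := norm_one_sub_le_of_mem_truncCone ht hw
  have := norm_nonneg (1 - w)
  linarith

lemma norm_one_sub_pos_of_mem_truncCone {t : ℝ} {w : ℂ} (hw : w ∈ truncCone t) :
    0 < ‖1 - w‖ := by
  refine norm_pos_iff.2 fun h => ?_
  have := hw.2
  simp [h] at this

section LocalAnalysis

variable {Φ : ℂ → ℂ} {β t : ℝ}

lemma norm_one_sub_bounds_of_mem_truncCone (hβ : 0 < β) (ht : t ≤ 1 / 32) (h1 : Φ 1 = 1)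
    (hL : ∀ a b : ℂ, ‖a‖ ≤ 1 → ‖b‖ ≤ 1 → ‖Φ a - Φ b‖ ≤ ‖a - b‖)
    (hE : ∀ M ≤ t, ∀ a b : ℂ, ‖a‖ ≤ 1 → ‖b‖ ≤ 1 → ‖1 - a‖ ≤ M → ‖1 - b‖ ≤ M →
      ‖(Φ a - a - β * (1 - a) ^ 2) - (Φ b - b - β * (1 - b) ^ 2)‖ ≤ β / 16 * M * ‖a - b‖)
    {z w : ℂ} (hw : w ∈ truncCone t) (h : w = z * Φ w) :
    β / 4 * ‖1 - w‖ ^ 2 ≤ ‖1 - z‖ ∧ ‖1 - z‖ ≤ 3 * β * ‖1 - w‖ ^ 2 := by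
  have hw1 := norm_le_one_of_mem_truncCone ht hw
  have e1 := hE ‖1 - w‖ hw.1.le w 1 hw1 (by simp) le_rfl (by simp)
  have e2 := hL 1 w (by simp) hw1
  have hut : ‖1 - w‖ < t := hw.1
  rw [h1] at e1 e2
  rw [norm_sub_rev w 1] at e1
  have e3 : (1 - z) * Φ w = (Φ w - w - β * (1 - w) ^ 2 - (1 - 1 - β * (1 - 1) ^ 2)) +
      β * (1 - w) ^ 2 := by
    linear_combination h
  set r := Φ w - w - β * (1 - w) ^ 2 - (1 - 1 - β * (1 - 1) ^ 2) with hr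
  have n0 : ‖(β : ℂ) * (1 - w) ^ 2‖ = β * ‖1 - w‖ ^ 2 := by
    rw [norm_mul, norm_pow, Complex.norm_real, Real.norm_of_nonneg hβ.le]
  have n1 : ‖1 - z‖ * ‖Φ w‖ ≤ ‖r‖ + β * ‖1 - w‖ ^ 2 := by
    rw [← norm_mul, e3, ← n0]
    exact norm_add_le _ _
  have n2 : β * ‖1 - w‖ ^ 2 - ‖r‖ ≤ ‖1 - z‖ * ‖Φ w‖ := by
    rw [← norm_mul, e3, ← n0, add_comm]
    have := norm_sub_le ((β : ℂ) * (1 - w) ^ 2 + r) r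
    rw [add_sub_cancel_right] at this
    linarith
  have n3 : ‖Φ w‖ ≤ 33 / 32 := by
    have := norm_sub_le (1 : ℂ) (1 - Φ w)
    rw [sub_sub_cancel, norm_one] at this
    linarith
  have n4 : 31 / 32 ≤ ‖Φ w‖ := by
    have := norm_add_le (1 - Φ w) (Φ w)
    rw [sub_add_cancel, norm_one] at this
    linarith
  have hz := norm_nonneg (1 - z)
  have hb : 0 ≤ β * ‖1 - w‖ ^ 2 := by positivity
  constructor <;> nlinarith

lemma expanding_of_mem_truncCone (hβ : 0 < β) (ht : t ≤ 1 / 32) (h1 : Φ 1 = 1)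
    (hL : ∀ a b : ℂ, ‖a‖ ≤ 1 → ‖b‖ ≤ 1 → ‖Φ a - Φ b‖ ≤ ‖a - b‖)
    (hE : ∀ M ≤ t, ∀ a b : ℂ, ‖a‖ ≤ 1 → ‖b‖ ≤ 1 → ‖1 - a‖ ≤ M → ‖1 - b‖ ≤ M →
      ‖(Φ a - a - β * (1 - a) ^ 2) - (Φ b - b - β * (1 - b) ^ 2)‖ ≤ β / 16 * M * ‖a - b‖)
    {z a b : ℂ} (ha : a ∈ truncCone t) (hb : b ∈ truncCone t) (h : a = z * Φ a) :
    β / 16 * ‖1 - a‖ * ‖a - b‖ ≤ ‖(a - z * Φ a) - (b - z * Φ b)‖ := by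
  have ha1 := norm_le_one_of_mem_truncCone ht ha
  have hb1 := norm_le_one_of_mem_truncCone ht hb
  have hz := (norm_one_sub_bounds_of_mem_truncCone hβ ht h1 hL hE ha h).2
  set M := max ‖1 - a‖ ‖1 - b‖ with hM
  have haM : ‖1 - a‖ ≤ M := le_max_left _ _
  have hbM : ‖1 - b‖ ≤ M := le_max_right _ _
  have hMt : M < t := max_lt ha.1 hb.1
  have hM0 : 0 ≤ M := (norm_nonneg _).trans haM
  have e1 := hE M hMt.le a b ha1 hb1 haM hbM
  have e2 := hL a b ha1 hb1
  set r := (Φ a - a - β * (1 - a) ^ 2) - (Φ b - b - β * (1 - b) ^ 2) with hr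
  have e3 : (β : ℂ) * (2 - a - b) * (a - b) =
      ((a - z * Φ a) - (b - z * Φ b)) + (r - (1 - z) * (Φ a - Φ b)) := by
    rw [hr]
    ring
  have n1 : β * ‖2 - a - b‖ * ‖a - b‖ ≤
      ‖(a - z * Φ a) - (b - z * Φ b)‖ + (‖r‖ + ‖1 - z‖ * ‖Φ a - Φ b‖) := by
    have := (norm_add_le ((a - z * Φ a) - (b - z * Φ b)) (r - (1 - z) * (Φ a - Φ b))).trans
      (add_le_add_right (norm_sub_le _ _) _)
    rwa [← e3, norm_mul, norm_mul, norm_mul, Complex.norm_real, Real.norm_of_nonneg hβ.le] at this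
  have n2 : M / 4 ≤ ‖2 - a - b‖ := by
    have h3 := (le_abs_self _).trans (Complex.abs_re_le_norm (2 - a - b))
    have h4 : (2 - a - b).re = (1 - a).re + (1 - b).re := by
      simp
      ring
    have h5 := ha.2
    have h6 := hb.2
    have h7 : M ≤ ‖1 - a‖ + ‖1 - b‖ :=
      max_le (by linarith [norm_nonneg (1 - b)]) (by linarith [norm_nonneg (1 - a)])
    linarith
  have hd : 0 ≤ ‖a - b‖ := norm_nonneg _
  have n3 : ‖1 - z‖ * ‖Φ a - Φ b‖ ≤ 3 / 32 * β * M * ‖a - b‖ := by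
    have : ‖1 - z‖ ≤ 3 / 32 * β * M := by
      refine hz.trans ?_
      have : ‖1 - a‖ ^ 2 ≤ M * (1 / 32) := by
        rw [sq]
        exact mul_le_mul haM (by linarith [ha.1]) (norm_nonneg _) hM0
      nlinarith
    gcongr
  have n4 : β * (M / 4) * ‖a - b‖ ≤ β * ‖2 - a - b‖ * ‖a - b‖ := by gcongr
  have n5 : β * ‖1 - a‖ * ‖a - b‖ ≤ β * M * ‖a - b‖ := by gcongr
  have n6 : 0 ≤ β * M * ‖a - b‖ := by positivity
  linarith

lemma exists_mem_truncCone (hβ : 0 < β) (ht : t ≤ 1 / 32) (ht0 : 0 < t) (h1 : Φ 1 = 1)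
    (hL : ∀ a b : ℂ, ‖a‖ ≤ 1 → ‖b‖ ≤ 1 → ‖Φ a - Φ b‖ ≤ ‖a - b‖)
    (hE : ∀ M ≤ t, ∀ a b : ℂ, ‖a‖ ≤ 1 → ‖b‖ ≤ 1 → ‖1 - a‖ ≤ M → ‖1 - b‖ ≤ M →
      ‖(Φ a - a - β * (1 - a) ^ 2) - (Φ b - b - β * (1 - b) ^ 2)‖ ≤ β / 16 * M * ‖a - b‖)
    {z : ℂ} (hz : ‖1 - z‖ < β * t ^ 2 / 4) (hz1 : z ≠ 1) (hzre : (z - 1).re < ‖z - 1‖ / 2) :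
    ∃ w ∈ truncCone t, w = z * Φ w := by
  have hβ' : (β : ℂ) ≠ 0 := by exact_mod_cast hβ.ne'
  set ζ := 1 - z with hζ
  have hζ0 : ζ ≠ 0 := sub_ne_zero.2 (Ne.symm hz1)
  have hζre : -(‖ζ‖ / 2) < ζ.re := by
    have e : z - 1 = -ζ := by rw [hζ]; ring
    rw [e, norm_neg, Complex.neg_re] at hzre
    linarith
  obtain ⟨u₀, hu, hre0⟩ : ∃ u : ℂ, u ^ 2 = ζ / β ∧ 0 ≤ u.re := by
    obtain ⟨u, hu⟩ := IsAlgClosed.exists_pow_nat_eq (ζ / β) (n := 2) (by norm_num)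
    rcases le_total 0 u.re with h | h
    · exact ⟨u, hu, h⟩
    · exact ⟨-u, by rw [neg_sq, hu], by rw [Complex.neg_re]; linarith⟩
  have hζu : ζ = β * u₀ ^ 2 := by
    rw [hu]
    field_simp
  have hs : ‖ζ‖ = β * ‖u₀‖ ^ 2 := by
    rw [hζu, norm_mul, norm_pow, Complex.norm_real, Real.norm_of_nonneg hβ.le]
  set s := ‖u₀‖ with hsdef
  have hs0 : 0 < s := by
    refine norm_pos_iff.2 fun h => hζ0 ?_
    rw [hζu, h]
    simp
  have hst : s < t / 2 := by
    rw [hs] at hz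
    have : s ^ 2 < (t / 2) ^ 2 := by
      have : β * s ^ 2 < β * (t / 2) ^ 2 := by linarith
      exact lt_of_mul_lt_mul_left this hβ.le
    exact lt_of_pow_lt_pow_left₀ 2 (by positivity) this
  have hre : s / 2 < u₀.re := by
    have e1 : ζ.re = β * (u₀.re ^ 2 - u₀.im ^ 2) := by
      rw [hζu, Complex.re_ofReal_mul, sq u₀, Complex.mul_re]
      ring
    have e2 : s ^ 2 = u₀.re ^ 2 + u₀.im ^ 2 := by
      rw [hsdef, Complex.sq_norm, Complex.normSq_apply]
      ring
    rw [hs, e1] at hζre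
    have : -(s ^ 2 / 2) < u₀.re ^ 2 - u₀.im ^ 2 := by
      refine lt_of_mul_lt_mul_left (a := β) ?_ hβ.le
      linarith
    exact lt_of_pow_lt_pow_left₀ 2 hre0 (by nlinarith)
  set P : ℂ → ℂ := fun x => 1 - u₀ * (1 + x) with hP
  have hPsub : ∀ x, 1 - P x = u₀ * (1 + x) := fun x => by simp [hP]
  have hPdiff : ∀ x y, ‖P x - P y‖ = s * ‖x - y‖ := by
    intro x y
    rw [hsdef, ← norm_mul, ← norm_neg]
    congr 1
    simp only [hP]
    ring
  have hPM : ∀ x : ℂ, ‖x‖ ≤ 1 / 8 → ‖1 - P x‖ ≤ 9 / 8 * s := by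
    intro x hx
    rw [hPsub, norm_mul]
    have : ‖1 + x‖ ≤ 9 / 8 := (norm_add_le _ _).trans (by rw [norm_one]; linarith)
    nlinarith
  have hPcone : ∀ x : ℂ, ‖x‖ ≤ 1 / 8 → P x ∈ truncCone t := by
    intro x hx
    have h2 := hPM x hx
    refine ⟨by linarith, ?_⟩
    have h3 : u₀.re - s / 8 ≤ (1 - P x).re := by
      rw [hPsub, mul_add, mul_one, Complex.add_re]
      have h4 := (neg_abs_le _).trans' (neg_le_neg (Complex.abs_re_le_norm (u₀ * x)))
      rw [norm_mul] at h4
      nlinarith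
    linarith
  have hPn : ∀ x : ℂ, ‖x‖ ≤ 1 / 8 → ‖P x‖ ≤ 1 := fun x hx =>
    norm_le_one_of_mem_truncCone ht (hPcone x hx)
  set N : ℂ → ℂ := fun x => (Φ (P x) - P x - β * (1 - P x) ^ 2) + ζ * (1 - Φ (P x)) with hN
  have hNdiff : ∀ x y : ℂ, ‖x‖ ≤ 1 / 8 → ‖y‖ ≤ 1 / 8 → ‖N x - N y‖ ≤ ‖ζ‖ * (1 / 8 * ‖x - y‖) := by
    intro x y hx hy
    have e1 := hE (9 / 8 * s) (by linarith) _ _ (hPn x hx) (hPn y hy) (hPM x hx) (hPM y hy)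
    have e2 := hL _ _ (hPn x hx) (hPn y hy)
    rw [hPdiff] at e1 e2
    have e : N x - N y = ((Φ (P x) - P x - β * (1 - P x) ^ 2) -
        (Φ (P y) - P y - β * (1 - P y) ^ 2)) - ζ * (Φ (P x) - Φ (P y)) := by
      simp only [hN]
      ring
    rw [e]
    refine (norm_sub_le _ _).trans ?_
    rw [norm_mul]
    have e3 : ‖ζ‖ * ‖Φ (P x) - Φ (P y)‖ ≤ ‖ζ‖ * (s * ‖x - y‖) := by gcongr
    have e4 : ‖ζ‖ * (s * ‖x - y‖) ≤ ‖ζ‖ * (1 / 64 * ‖x - y‖) := by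
      gcongr
      linarith
    have e5 : β / 16 * (9 / 8 * s) * (s * ‖x - y‖) = ‖ζ‖ * (9 / 128 * ‖x - y‖) := by
      rw [hs]
      ring
    have e6 : 0 ≤ ‖ζ‖ * ‖x - y‖ := by positivity
    linarith
  have hN0 : ‖N 0‖ ≤ ‖ζ‖ * (1 / 8) := by
    have h00 : ‖(0 : ℂ)‖ ≤ 1 / 8 := by simp
    have e1 := hE (9 / 8 * s) (by linarith) _ 1 (hPn 0 h00) (by simp) (hPM 0 h00)
      (by rw [sub_self, norm_zero]; positivity)
    have e2 := hL 1 _ (by simp) (hPn 0 h00)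
    have e0 : ‖1 - P 0‖ = s := by rw [hPsub, add_zero, mul_one]
    rw [h1] at e1 e2
    rw [norm_sub_rev (P 0) 1] at e1
    rw [e0] at e1 e2
    have e : N 0 = ((Φ (P 0) - P 0 - β * (1 - P 0) ^ 2) - (1 - 1 - β * (1 - 1) ^ 2)) +
        ζ * (1 - Φ (P 0)) := by
      simp only [hN]
      ring
    rw [e]
    refine (norm_add_le _ _).trans ?_
    rw [norm_mul]
    have e3 : ‖ζ‖ * ‖1 - Φ (P 0)‖ ≤ ‖ζ‖ * (1 / 64) := by
      gcongr
      linarith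
    have e5 : β / 16 * (9 / 8 * s) * s = ‖ζ‖ * (9 / 128) := by
      rw [hs]
      ring
    have e6 : 0 ≤ ‖ζ‖ := by positivity
    linarith
  have hζpos : 0 < ‖ζ‖ := norm_pos_iff.2 hζ0
  set T : ℂ → ℂ := fun x => -(x ^ 2 + N x / ζ) / 2 with hT
  have hTdiff : ∀ x y : ℂ, ‖x‖ ≤ 1 / 8 → ‖y‖ ≤ 1 / 8 → ‖T x - T y‖ ≤ 1 / 2 * ‖x - y‖ := by
    intro x y hx hy
    have e : T x - T y = -((x + y) * (x - y) + (N x - N y) / ζ) / 2 := by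
      simp only [hT]
      ring
    rw [e, norm_div, norm_neg, Complex.norm_ofNat]
    have e1 : ‖(x + y) * (x - y)‖ ≤ 1 / 4 * ‖x - y‖ := by
      rw [norm_mul]
      have := norm_add_le x y
      gcongr
      linarith
    have e2 : ‖(N x - N y) / ζ‖ ≤ 1 / 8 * ‖x - y‖ := by
      rw [norm_div, div_le_iff₀ hζpos, mul_comm]
      exact hNdiff x y hx hy
    have e3 := norm_add_le ((x + y) * (x - y)) ((N x - N y) / ζ)
    have e4 := norm_nonneg (x - y)
    linarith
  have hT0 : ‖T 0‖ ≤ 1 / 16 := by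
    have e : T 0 = -(N 0 / ζ) / 2 := by
      simp [hT]
    have e2 : ‖N 0 / ζ‖ ≤ 1 / 8 := by
      rw [norm_div, div_le_iff₀ hζpos, mul_comm]
      exact hN0
    rw [e, norm_div, norm_neg, Complex.norm_ofNat]
    linarith
  have hmaps : MapsTo T (Metric.closedBall 0 (1 / 8)) (Metric.closedBall 0 (1 / 8)) := by
    intro x hx
    rw [mem_closedBall_zero_iff] at hx ⊢
    have e1 := hTdiff x 0 hx (by simp)
    have e2 := norm_add_le (T x - T 0) (T 0)
    rw [sub_add_cancel] at e2
    rw [sub_zero] at e1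
    linarith
  have hcontr : ContractingWith (1 / 2) (hmaps.restrict T _ _) := by
    refine ⟨by rw [← NNReal.coe_lt_coe]; norm_num, LipschitzWith.of_dist_le_mul fun x y => ?_⟩
    rw [Subtype.dist_eq, Subtype.dist_eq, dist_eq_norm, dist_eq_norm]
    have := hTdiff x y (mem_closedBall_zero_iff.1 x.2) (mem_closedBall_zero_iff.1 y.2)
    simpa using this
  obtain ⟨x, hx, hfix, -⟩ := hcontr.exists_fixedPoint' Metric.isClosed_closedBall.isComplete hmaps
    (x := 0) (by simp) (edist_ne_top _ _)
  refine ⟨P x, hPcone x (mem_closedBall_zero_iff.1 hx), ?_⟩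
  have h2 : -(x ^ 2 + N x / ζ) / 2 = x := hfix
  have h3 : ζ * (2 * x + x ^ 2) + N x = 0 := by
    have : N x / ζ * ζ = N x := div_mul_cancel₀ _ hζ0
    linear_combination (-2 * ζ) * h2 - this
  have h4 : N x = (Φ (P x) - P x - β * (u₀ * (1 + x)) ^ 2) + ζ * (1 - Φ (P x)) := by
    rw [← hPsub]
  have h5 : z = 1 - ζ := by rw [hζ]; ring
  rw [h5]
  linear_combination -h3 + h4 + (1 + x) ^ 2 * hζu

end LocalAnalysis

lemma deltaDom_pi_div_three (R : ℝ) :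
    deltaDom R (Real.pi / 3) = {z : ℂ | ‖z‖ < R ∧ (z - 1).re < ‖z - 1‖ / 2} := by
  ext z
  simp only [deltaDom, mem_ofPred_eq]
  refine and_congr_right fun _ => ?_
  have hkey : z ≠ 1 → (Real.pi / 3 < |Complex.arg (z - 1)| ↔ (z - 1).re < ‖z - 1‖ / 2) := by
    intro hz
    have hz' : z - 1 ≠ 0 := sub_ne_zero.2 hz
    have hn : 0 < ‖z - 1‖ := norm_pos_iff.2 hz'
    have hpi := Real.pi_pos
    rw [← Real.strictAntiOn_cos.lt_iff_gt (a := |Complex.arg (z - 1)|) (b := Real.pi / 3)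
      ⟨abs_nonneg _, Complex.abs_arg_le_pi _⟩ ⟨by positivity, by linarith⟩, Real.cos_abs,
      Complex.cos_arg hz', Real.cos_pi_div_three, div_lt_iff₀ hn]
    constructor <;> intro h <;> linarith
  constructor
  · rintro ⟨hz, h⟩
    exact (hkey hz).1 h
  · intro h
    have hz : z ≠ 1 := by
      rintro rfl
      simp at h
    exact ⟨hz, (hkey hz).2 h⟩

lemma isOpen_deltaDom_pi_div_three (R : ℝ) : IsOpen (deltaDom R (Real.pi / 3)) := by
  rw [deltaDom_pi_div_three]
  have h : Continuous fun z : ℂ => z - 1 := by fun_prop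
  exact (isOpen_lt continuous_norm continuous_const).inter
    (isOpen_lt (Complex.continuous_re.comp h) (h.norm.div_const 2))

/-- Solutions of `w = z Φ(w)` inside a disc of radius `x < 1` persist slightly outside the unit
disc, away from `1`. -/
lemma exists_pos_forall_exists_mem_ball {Φ y : ℂ → ℂ}
    (hd : DifferentiableOn ℂ Φ (Metric.ball 0 1)) (h0 : Φ 0 ≠ 0) {x ρ r : ℝ} (hx1 : x < 1)
    (hρ0 : 0 ≤ ρ) (hρ1 : ρ < 1) (hr : 0 < r)
    (hρ : ∀ a b : ℂ, ‖a‖ ≤ x → ‖b‖ ≤ 1 → ‖Φ a - Φ b‖ ≤ ρ * ‖a - b‖)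
    (hy : ∀ z : ℂ, ‖z‖ ≤ 1 → y z = z * Φ (y z))
    (hyx : ∀ z : ℂ, ‖z‖ ≤ 1 → r / 2 ≤ ‖z - 1‖ → ‖y z‖ < x) :
    ∃ e > 0, ∀ z : ℂ, ‖z‖ < 1 + e → r ≤ ‖z - 1‖ → ∃ w ∈ Metric.ball (0 : ℂ) x, w = z * Φ w := by
  set K : Set ℂ := Metric.closedBall 0 1 ∩ {z | r / 2 ≤ ‖z - 1‖} with hK
  have hKc : IsCompact K := (isCompact_closedBall _ _).inter_right
    (isClosed_le continuous_const (by fun_prop))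
  set W : Set ℂ := {z | ∃ w ∈ Metric.ball (0 : ℂ) x, w = z * Φ w} with hW
  have hKW : K ⊆ interior W := by
    rintro z ⟨hz1, hz2⟩
    rw [mem_closedBall_zero_iff] at hz1
    have hyz := hyx z hz1 hz2
    have hball : y z ∈ Metric.ball (0 : ℂ) 1 := by
      rw [mem_ball_zero_iff]
      linarith
    have hder : ‖deriv Φ (y z)‖ ≤ ρ := by
      refine norm_deriv_le_of_lip' hρ0 ?_
      filter_upwards [continuous_norm.continuousAt.eventually_lt_const hyz] with v hv
      exact hρ v (y z) hv.le (by linarith)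
    have hne : 1 - z * deriv Φ (y z) ≠ 0 := by
      intro h
      have h1 : ‖z * deriv Φ (y z)‖ = 1 := by
        rw [← sub_eq_zero.1 h, norm_one]
      rw [norm_mul] at h1
      have := norm_nonneg z
      have := norm_nonneg (deriv Φ (y z))
      nlinarith
    obtain ⟨g, hg, hg0, hge⟩ := exists_local_branch hd h0 hball (hy z hz1) hne
    rw [mem_interior_iff_mem_nhds]
    have hgb : ∀ᶠ v in 𝓝 z, g v ∈ Metric.ball (0 : ℂ) x := hg.continuousAt.eventually_mem <|
      Metric.isOpen_ball.mem_nhds (by rwa [hg0, mem_ball_zero_iff])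
    filter_upwards [hge, hgb] with v h1 h2 using ⟨g v, h2, h1⟩
  obtain ⟨d, hd0, hdW⟩ := hKc.exists_thickening_subset_open isOpen_interior hKW
  refine ⟨min d (r / 2), by positivity, fun z hz hzr => ?_⟩
  have hd1 := min_le_left d (r / 2)
  have hd2 := min_le_right d (r / 2)
  suffices h : z ∈ Metric.thickening d K from (interior_subset (hdW h) : z ∈ W)
  rw [Metric.mem_thickening_iff]
  rcases le_total ‖z‖ 1 with h1 | h1
  · exact ⟨z, ⟨mem_closedBall_zero_iff.2 h1, by simp only [mem_ofPred_eq]; linarith⟩, by simpa⟩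
  · have hz0 : (‖z‖ : ℂ) ≠ 0 := by
      norm_cast
      linarith
    have hzz : ‖z - z / ‖z‖‖ = ‖z‖ - 1 := by
      have : z - z / ‖z‖ = ((‖z‖ - 1 : ℝ) : ℂ) * (z / ‖z‖) := by
        push_cast
        field_simp
      rw [this, norm_mul, norm_div, Complex.norm_real, Complex.norm_real, norm_norm,
        Real.norm_of_nonneg (by linarith), div_self (by linarith), mul_one]
    refine ⟨z / ‖z‖, ⟨mem_closedBall_zero_iff.2 ?_, ?_⟩, ?_⟩
    · rw [norm_div, Complex.norm_real, norm_norm, div_self (by linarith)]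
    · have := norm_add_le (z - z / ‖z‖) (z / ‖z‖ - 1)
      rw [sub_add_sub_cancel, hzz] at this
      simp only [mem_ofPred_eq]
      linarith
    · rw [dist_eq_norm, hzz]
      linarith

lemma exists_norm_lt_of_compact {y : ℂ → ℂ} {r : ℝ}
    (hyc : ContinuousOn y (Metric.closedBall 0 1))
    (hy1 : ∀ z : ℂ, ‖z‖ ≤ 1 → z ≠ 1 → ‖y z‖ < 1) (hr : 0 < r) :
    ∃ x : ℝ, 0 ≤ x ∧ x < 1 ∧ ∀ z : ℂ, ‖z‖ ≤ 1 → r / 2 ≤ ‖z - 1‖ → ‖y z‖ < x := by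
  set K : Set ℂ := Metric.closedBall 0 1 ∩ {z | r / 2 ≤ ‖z - 1‖} with hK
  have hKc : IsCompact K := (isCompact_closedBall _ _).inter_right
    (isClosed_le continuous_const (by fun_prop))
  rcases K.eq_empty_or_nonempty with he | hne
  · refine ⟨0, le_rfl, one_pos, fun z hz1 hz2 => ?_⟩
    have : z ∈ K := ⟨mem_closedBall_zero_iff.2 hz1, hz2⟩
    rw [he] at this
    exact this.elim
  · obtain ⟨z₀, hz₀, hmax⟩ := hKc.exists_isMaxOn hne (hyc.norm.mono inter_subset_left)
    have h1 : ‖y z₀‖ < 1 := by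
      refine hy1 z₀ (mem_closedBall_zero_iff.1 hz₀.1) ?_
      rintro rfl
      have := hz₀.2
      simp only [mem_ofPred_eq, sub_self, norm_zero] at this
      linarith
    obtain ⟨x, hx, hx1⟩ := exists_between h1
    exact ⟨x, (norm_nonneg _).trans hx.le, hx1, fun z h2 h3 =>
      (hmax ⟨mem_closedBall_zero_iff.2 h2, h3⟩ : ‖y z‖ ≤ ‖y z₀‖).trans_lt hx⟩

/-- Analytic continuation of the solution of `y = z Φ(y)` to a Δ-domain, with square-root control
near `1`. -/
lemma exists_deltaDom_extension {Φ y : ℂ → ℂ} {β : ℝ}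
    (hd : DifferentiableOn ℂ Φ (Metric.ball 0 1)) (h0 : Φ 0 ≠ 0) (h1 : Φ 1 = 1) (hβ : 0 < β)
    (hL : ∀ a b : ℂ, ‖a‖ ≤ 1 → ‖b‖ ≤ 1 → ‖Φ a - Φ b‖ ≤ ‖a - b‖)
    (hρ : ∀ x : ℝ, 0 ≤ x → x < 1 → ∃ ρ : ℝ, 0 ≤ ρ ∧ ρ < 1 ∧
      ∀ a b : ℂ, ‖a‖ ≤ x → ‖b‖ ≤ 1 → ‖Φ a - Φ b‖ ≤ ρ * ‖a - b‖)
    (hE : ∃ t > 0, ∀ M ≤ t, ∀ a b : ℂ, ‖a‖ ≤ 1 → ‖b‖ ≤ 1 → ‖1 - a‖ ≤ M → ‖1 - b‖ ≤ M →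
      ‖(Φ a - a - β * (1 - a) ^ 2) - (Φ b - b - β * (1 - b) ^ 2)‖ ≤ β / 16 * M * ‖a - b‖)
    (hyc : ContinuousOn y (Metric.closedBall 0 1))
    (hy : ∀ z : ℂ, ‖z‖ ≤ 1 → y z = z * Φ (y z))
    (hy1 : ∀ z : ℂ, ‖z‖ ≤ 1 → z ≠ 1 → ‖y z‖ < 1) :
    ∃ (R c C : ℝ) (Y : ℂ → ℂ), 1 < R ∧ 0 < c ∧ 0 ≤ C ∧
      DifferentiableOn ℂ Y (deltaDom R (Real.pi / 3)) ∧
      ∀ z ∈ deltaDom R (Real.pi / 3), ‖Y z‖ < 1 ∧ Y z = z * Φ (Y z) ∧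
        c * √‖1 - z‖ ≤ 1 - ‖Y z‖ ∧ ‖1 - Y z‖ ≤ C * √‖1 - z‖ := by
  obtain ⟨t, ht0, ht, hE⟩ : ∃ t > 0, t ≤ 1 / 32 ∧ ∀ M ≤ t, ∀ a b : ℂ, ‖a‖ ≤ 1 → ‖b‖ ≤ 1 →
      ‖1 - a‖ ≤ M → ‖1 - b‖ ≤ M →
      ‖(Φ a - a - β * (1 - a) ^ 2) - (Φ b - b - β * (1 - b) ^ 2)‖ ≤ β / 16 * M * ‖a - b‖ := by
    obtain ⟨t, ht0, hE⟩ := hE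
    exact ⟨min t (1 / 32), by positivity, min_le_right _ _,
      fun M hM => hE M (hM.trans (min_le_left _ _))⟩
  set r := β * t ^ 2 / 4 with hr
  have hr0 : 0 < r := by positivity
  obtain ⟨x, hx0, hx1, hyx⟩ := exists_norm_lt_of_compact hyc hy1 hr0
  obtain ⟨ρ, hρ0, hρ1, hρ⟩ := hρ x hx0 hx1
  obtain ⟨e, he0, he⟩ := exists_pos_forall_exists_mem_ball hd h0 hx1 hρ0 hρ1 hr0 hρ hy hyx
  set R := 1 + min e ((1 - ρ) / 2) with hR
  have hR1 : 1 < R := by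
    have : 0 < min e ((1 - ρ) / 2) := lt_min he0 (by linarith)
    linarith
  have hRe : R ≤ 1 + e := by linarith [min_le_left e ((1 - ρ) / 2)]
  have hR2 : R ≤ 1 + (1 - ρ) / 2 := by linarith [min_le_right e ((1 - ρ) / 2)]
  have hRρ : R * ρ < 1 := by nlinarith
  set U : Set ℂ := Metric.ball 0 x ∪ truncCone t with hU
  have hUo : IsOpen U := Metric.isOpen_ball.union (isOpen_truncCone t)
  have hUn : ∀ w ∈ U, ‖w‖ < 1 := by
    rintro w (hw | hw)
    · exact (mem_ball_zero_iff.1 hw).trans hx1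
    · have := norm_one_sub_le_of_mem_truncCone ht hw
      have := norm_one_sub_pos_of_mem_truncCone hw
      linarith
  have hball : ∀ z a b : ℂ, ‖z‖ ≤ R → ‖a‖ ≤ x → ‖b‖ ≤ 1 →
      (1 - R * ρ) * ‖a - b‖ ≤ ‖(a - z * Φ a) - (b - z * Φ b)‖ := by
    intro z a b hz ha hb
    have e1 : a - b = ((a - z * Φ a) - (b - z * Φ b)) + z * (Φ a - Φ b) := by ring
    have e2 := norm_add_le ((a - z * Φ a) - (b - z * Φ b)) (z * (Φ a - Φ b))
    rw [← e1, norm_mul] at e2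
    have e3 : ‖z‖ * ‖Φ a - Φ b‖ ≤ R * (ρ * ‖a - b‖) :=
      mul_le_mul hz (hρ a b ha hb) (norm_nonneg _) (by linarith)
    linarith
  have hinj : ∀ z ∈ deltaDom R (Real.pi / 3), ∀ a ∈ U, a = z * Φ a → ∃ c > 0, ∀ b ∈ U,
      c * ‖a - b‖ ≤ ‖(a - z * Φ a) - (b - z * Φ b)‖ := by
    intro z hz a ha h
    have hzR : ‖z‖ ≤ R := hz.1.le
    rcases ha with ha | ha
    · exact ⟨1 - R * ρ, by linarith, fun b hb =>
        hball z a b hzR (mem_ball_zero_iff.1 ha).le (hUn b hb).le⟩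
    · have hpos := norm_one_sub_pos_of_mem_truncCone ha
      refine ⟨min (1 - R * ρ) (β / 16 * ‖1 - a‖), lt_min (by linarith) (by positivity),
        fun b hb => ?_⟩
      rcases hb with hb | hb
      · refine (mul_le_mul_of_nonneg_right (min_le_left _ _) (norm_nonneg _)).trans ?_
        rw [norm_sub_rev a b, norm_sub_rev (a - z * Φ a)]
        exact hball z b a hzR (mem_ball_zero_iff.1 hb).le (hUn a (Or.inr ha)).le
      · refine (mul_le_mul_of_nonneg_right (min_le_right _ _) (norm_nonneg _)).trans ?_
        exact expanding_of_mem_truncCone hβ ht h1 hL hE ha hb h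
  have hex : ∀ z ∈ deltaDom R (Real.pi / 3), ∃ w ∈ U, w = z * Φ w := by
    intro z hz
    have hz' := hz
    rw [deltaDom_pi_div_three] at hz'
    rcases lt_or_ge ‖z - 1‖ r with h | h
    · obtain ⟨w, hw, hwz⟩ := exists_mem_truncCone hβ ht ht0 h1 hL hE
        (by rwa [norm_sub_rev]) hz.2.1 hz'.2
      exact ⟨w, Or.inr hw, hwz⟩
    · obtain ⟨w, hw, hwz⟩ := he z (hz.1.trans_le hRe) h
      exact ⟨w, Or.inl hw, hwz⟩
  obtain ⟨Y, hYd, hY⟩ := exists_global_branch hd h0 hUo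
    (fun w hw => mem_ball_zero_iff.2 (hUn w hw)) (isOpen_deltaDom_pi_div_three R) hinj hex
  refine ⟨R, min ((1 - x) / 2) (1 / (8 * √(3 * β))), max √(4 / β) (2 / (1 - R * ρ)), Y, hR1,
    lt_min (by linarith) (by positivity), le_max_of_le_left (Real.sqrt_nonneg _), hYd,
    fun z hz => ?_⟩
  obtain ⟨hYU, hYe⟩ := hY z hz
  refine ⟨hUn _ hYU, hYe, ?_⟩
  set w := Y z
  have hsq : √‖1 - z‖ * √‖1 - z‖ = ‖1 - z‖ := Real.mul_self_sqrt (norm_nonneg _)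
  have hs0 : 0 ≤ √‖1 - z‖ := Real.sqrt_nonneg _
  have hs2 : √‖1 - z‖ ≤ 2 := by
    rw [Real.sqrt_le_left (by norm_num)]
    have := norm_sub_le 1 z
    rw [norm_one] at this
    linarith [hz.1]
  rcases hYU with hw | hw
  · have hwx := mem_ball_zero_iff.1 hw
    constructor
    · calc _ ≤ (1 - x) / 2 * √‖1 - z‖ := by gcongr; exact min_le_left _ _
        _ ≤ (1 - x) / 2 * 2 := mul_le_mul_of_nonneg_left hs2 (by linarith)
        _ ≤ 1 - ‖w‖ := by linarith
    · have e1 := hball z w 1 hz.1.le hwx.le (by simp)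
      rw [sub_eq_zero.2 hYe, h1, mul_one, zero_sub, norm_neg, norm_sub_rev w 1] at e1
      have hp : 0 < 1 - R * ρ := by linarith
      calc ‖1 - w‖ ≤ ‖1 - z‖ / (1 - R * ρ) := by rwa [le_div_iff₀ hp, mul_comm]
        _ ≤ 2 * √‖1 - z‖ / (1 - R * ρ) := by
          gcongr
          nlinarith
        _ = 2 / (1 - R * ρ) * √‖1 - z‖ := by ring
        _ ≤ _ := by gcongr; exact le_max_right _ _
  · obtain ⟨b1, b2⟩ := norm_one_sub_bounds_of_mem_truncCone hβ ht h1 hL hE hw hYe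
    have b3 := norm_one_sub_le_of_mem_truncCone ht hw
    constructor
    · have e1 : √‖1 - z‖ ≤ √(3 * β) * ‖1 - w‖ := by
        rw [← Real.sqrt_sq (norm_nonneg (1 - w)), ← Real.sqrt_mul (by positivity)]
        exact Real.sqrt_le_sqrt b2
      have hp : 0 < √(3 * β) := by positivity
      calc _ ≤ 1 / (8 * √(3 * β)) * √‖1 - z‖ := by gcongr; exact min_le_right _ _
        _ ≤ 1 / (8 * √(3 * β)) * (√(3 * β) * ‖1 - w‖) := by gcongr
        _ = ‖1 - w‖ / 8 := by field_simp
        _ ≤ _ := b3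
    · calc ‖1 - w‖ = √(‖1 - w‖ ^ 2) := (Real.sqrt_sq (norm_nonneg _)).symm
        _ ≤ √(4 / β * ‖1 - z‖) := by
          refine Real.sqrt_le_sqrt ?_
          rw [div_mul_eq_mul_div, le_div_iff₀ hβ]
          linarith
        _ = √(4 / β) * √‖1 - z‖ := Real.sqrt_mul (by positivity) _
        _ ≤ _ := by gcongr; exact le_max_left _ _

lemma differentiableOn_pgfC {p : ℕ → ℝ} (hp : ∀ k, 0 ≤ p k) (hp1 : ∀ k, p k ≤ 1) :
    DifferentiableOn ℂ (pgfC p) (Metric.ball 0 1) := by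
  intro w hw
  have h := hasDerivAt_tsum_descFactorial hp hp1 0 (mem_ball_zero_iff.1 hw)
  simp only [Nat.descFactorial_zero, Nat.cast_one, Complex.ofReal_one, one_mul, Nat.sub_zero] at h
  exact h.differentiableAt.differentiableWithinAt

lemma continuousOn_pgfC {p : ℕ → ℝ} (hp : ∀ k, 0 ≤ p k) (hs : Summable p) :
    ContinuousOn (pgfC p) (Metric.closedBall 0 1) := by
  refine continuousOn_tsum (u := p) (fun k => by fun_prop) hs fun k w hw => ?_
  rw [norm_mul, norm_pow, Complex.norm_real, Real.norm_of_nonneg (hp k)]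
  exact mul_le_of_le_one_right (hp k) (pow_le_one₀ (norm_nonneg _) (mem_closedBall_zero_iff.1 hw))

lemma pgfC_zero (p : ℕ → ℝ) : pgfC p 0 = p 0 := by
  rw [pgfC, tsum_eq_single 0 fun k hk => by simp [hk]]
  simp

lemma pgfC_one {p : ℕ → ℝ} (hs : HasSum p 1) : pgfC p 1 = 1 := by
  simpa [pgfC] using (Complex.hasSum_ofReal.2 hs).tsum_eq

lemma pgfC_ofReal (p : ℕ → ℝ) (x : ℝ) : pgfC p x = ((∑' k, p k * x ^ k : ℝ) : ℂ) := by
  rw [pgfC, Complex.ofReal_tsum]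
  push_cast
  rfl

lemma norm_pgfC_le_norm {q : ℕ → ℝ} (hq0 : q 0 = 0) (hq : ∀ n, 0 ≤ q n) (hs : HasSum q 1) {z : ℂ}
    (hz : ‖z‖ ≤ 1) : ‖pgfC q z‖ ≤ ‖z‖ := by
  have h := hs.mul_right ‖z‖
  rw [one_mul] at h
  refine tsum_of_norm_bounded h fun n => ?_
  rw [norm_mul, norm_pow, Complex.norm_real, Real.norm_of_nonneg (hq n)]
  rcases eq_or_ne n 0 with rfl | hn
  · simp [hq0]
  · exact mul_le_mul_of_nonneg_left (pow_le_of_le_one (norm_nonneg _) hz hn) (hq n)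

/-- The functional equation extends from the real segment to the closed unit disc. -/
lemma pgfC_eq_mul_pgfC {p q : ℕ → ℝ} (hp : ∀ k, 0 ≤ p k) (hs : HasSum p 1) (hp1 : ∀ k, p k ≤ 1)
    (hq0 : q 0 = 0) (hq : ∀ n, 0 ≤ q n) (hqs : HasSum q 1) (hq1 : ∀ n, q n ≤ 1)
    (hfix : ∀ z ∈ Set.Icc (0:ℝ) 1,
      (∑' n, q n * z ^ n) = z * ∑' k, p k * (∑' n, q n * z ^ n) ^ k) {z : ℂ} (hz : ‖z‖ ≤ 1) :
    pgfC q z = z * pgfC p (pgfC q z) := by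
  have hmaps : MapsTo (pgfC q) (Metric.ball 0 1) (Metric.ball 0 1) := fun v hv => by
    rw [mem_ball_zero_iff] at hv ⊢
    exact (norm_pgfC_le_norm hq0 hq hqs hv.le).trans_lt hv
  have hmaps' : MapsTo (pgfC q) (Metric.closedBall 0 1) (Metric.closedBall 0 1) := fun v hv => by
    rw [mem_closedBall_zero_iff] at hv ⊢
    exact (norm_pgfC_le_norm hq0 hq hqs hv).trans hv
  have hq' := differentiableOn_pgfC hq hq1
  have hf : DifferentiableOn ℂ (fun v => v * pgfC p (pgfC q v)) (Metric.ball 0 1) :=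
    differentiableOn_id.mul ((differentiableOn_pgfC hp hp1).comp hq' hmaps)
  have hfreq : ∃ᶠ v in 𝓝[≠] (0 : ℂ), pgfC q v = v * pgfC p (pgfC q v) := by
    have ht : Tendsto (fun x : ℝ => (x : ℂ)) (𝓝[>] 0) (𝓝[≠] 0) := by
      refine tendsto_nhdsWithin_iff.2 ⟨?_, ?_⟩
      · exact (Complex.continuous_ofReal.tendsto' 0 0 Complex.ofReal_zero).mono_left
          nhdsWithin_le_nhds
      · filter_upwards [self_mem_nhdsWithin] with x hx
        exact Complex.ofReal_ne_zero.2 (ne_of_gt hx)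
    refine ht.frequently (Eventually.frequently ?_)
    filter_upwards [Ioc_mem_nhdsGT (zero_lt_one' ℝ)] with x hx
    have := hfix x ⟨hx.1.le, hx.2⟩
    rw [pgfC_ofReal, pgfC_ofReal, ← Complex.ofReal_mul, ← this]
  have heq : EqOn (pgfC q) (fun v => v * pgfC p (pgfC q v)) (Metric.ball 0 1) :=
    (hq'.analyticOnNhd Metric.isOpen_ball).eqOn_of_preconnected_of_frequently_eq
      (hf.analyticOnNhd Metric.isOpen_ball) (convex_ball _ _).isPreconnected
      (Metric.mem_ball_self one_pos) hfreq
  have hcl : closure (Metric.ball (0 : ℂ) 1) = Metric.closedBall 0 1 := closure_ball _ one_ne_zero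
  have hcq := continuousOn_pgfC hq hqs.summable
  have hcf : ContinuousOn (fun v => v * pgfC p (pgfC q v)) (Metric.closedBall 0 1) :=
    continuousOn_id.mul ((continuousOn_pgfC hp hs.summable).comp hcq hmaps')
  exact heq.of_subset_closure hcq hcf Metric.ball_subset_closedBall hcl.ge
    (mem_closedBall_zero_iff.2 hz)

/-- A pgf of span one with `p 0 ≠ 0` attains modulus one on the closed disc only at `1`. -/
lemma eq_one_of_norm_pgfC_eq_one {p : ℕ → ℝ} (hp : ∀ k, 0 ≤ p k) (hs : HasSum p 1)
    (hspan : ∀ d : ℕ, (∀ k, p k ≠ 0 → d ∣ k) → d = 1) (h0 : p 0 ≠ 0) {w : ℂ} (hw : ‖w‖ ≤ 1)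
    (h : ‖pgfC p w‖ = 1) : w = 1 := by
  set c := (starRingEnd ℂ) (pgfC p w) with hc
  have hc1 : ‖c‖ = 1 := by rw [hc, RCLike.norm_conj, h]
  have hn : ∀ k : ℕ, ‖c * w ^ k‖ ≤ 1 := fun k => by
    rw [norm_mul, hc1, one_mul, norm_pow]
    exact pow_le_one₀ (norm_nonneg _) hw
  have hre : ∀ k : ℕ, (c * w ^ k).re ≤ 1 := fun k => (Complex.re_le_norm _).trans (hn k)
  have hsum : HasSum (fun k => p k * (1 - (c * w ^ k).re)) 0 := by
    have e1 := (summable_mul_pow hp hs.summable hw).hasSum.mul_left c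
    have e2 := hs.sub (Complex.hasSum_re e1)
    have e3 : c * pgfC p w = 1 := by
      rw [hc, mul_comm, Complex.mul_conj, Complex.normSq_eq_norm_sq, h]
      norm_num
    have e4 : (1 : ℝ) - (c * ∑' k : ℕ, (p k : ℂ) * w ^ k).re = 0 := by
      change (1 : ℝ) - (c * pgfC p w).re = 0
      rw [e3, Complex.one_re, sub_self]
    rw [e4] at e2
    refine (congrArg (fun f => HasSum f _) (funext fun k => ?_)).mp e2
    rw [mul_left_comm, Complex.re_ofReal_mul]
    ring
  have hz := (hasSum_zero_iff_of_nonneg fun k =>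
    mul_nonneg (hp k) (sub_nonneg.2 (hre k))).1 hsum
  have hone : ∀ k, p k ≠ 0 → c * w ^ k = 1 := by
    intro k hk
    have e1 : (c * w ^ k).re = 1 := by
      have := (mul_eq_zero.1 (congrFun hz k)).resolve_left hk
      linarith
    have e2 : (c * w ^ k).im = 0 := by
      have e3 := Complex.sq_norm (c * w ^ k)
      rw [Complex.normSq_apply, e1] at e3
      have := hn k
      have := norm_nonneg (c * w ^ k)
      have : (c * w ^ k).im * (c * w ^ k).im ≤ 0 := by nlinarith
      exact mul_self_eq_zero.1 (le_antisymm this (mul_self_nonneg _))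
    exact Complex.ext e1 e2
  have hcone : c = 1 := by simpa using hone 0 h0
  have hord := hspan (orderOf w) fun k hk => by
    rw [orderOf_dvd_iff_pow_eq_one]
    simpa [hcone] using hone k hk
  exact orderOf_eq_one_iff.1 hord

lemma pos_zero_of_critical {p : ℕ → ℝ} (hp : ∀ k, 0 ≤ p k) (hs : HasSum p 1)
    (hs1 : HasSum (fun k : ℕ => (k : ℝ) * p k) 1) {n : ℕ} (hn : 2 ≤ n) (hpn : 0 < p n) :
    0 < p 0 := by
  refine (hp 0).lt_of_ne' fun h0 => ?_
  have hsub := hs1.sub hs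
  rw [sub_self] at hsub
  have hnn : ∀ k : ℕ, 0 ≤ (k : ℝ) * p k - p k := by
    intro k
    rcases Nat.eq_zero_or_pos k with rfl | hk
    · simp [h0]
    · have : (1 : ℝ) ≤ k := by exact_mod_cast hk
      nlinarith [hp k]
  have := congrFun ((hasSum_zero_iff_of_nonneg hnn).1 hsub) n
  have h2 : (2 : ℝ) ≤ n := by exact_mod_cast hn
  simp only [Pi.zero_apply] at this
  nlinarith

lemma norm_deriv_pgfC_sub_one_le {p : ℕ → ℝ} (hp : ∀ k, 0 ≤ p k) (hp1 : ∀ k, p k ≤ 1)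
    (hs1 : HasSum (fun k : ℕ => (k : ℝ) * p k) 1) {δ : ℝ} (hδ0 : 0 < δ)
    (hmom : Summable (fun k : ℕ => (k : ℝ) ^ ((2:ℝ) + δ) * p k)) {w : ℂ} (hw : ‖w‖ < 1) :
    ‖deriv (pgfC p) w - 1‖ ≤ (∑' k : ℕ, (k : ℝ) ^ ((2:ℝ) + δ) * p k) * ‖1 - w‖ := by
  have hs := Complex.hasSum_ofReal.2 hs1
  have hs2 : Summable fun k : ℕ => ((k.descFactorial 1 : ℝ) * p k : ℂ) * w ^ (k - 1) := by
    refine Summable.of_norm ?_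
    refine (summable_descFactorial_mul_pow_sub hp hp1 1 (norm_nonneg w) hw).congr fun k => ?_
    rw [norm_mul, norm_pow, norm_mul, Complex.norm_real, Complex.norm_real,
      Real.norm_of_nonneg (hp k), Real.norm_of_nonneg (by positivity)]
  have hsub := hs2.hasSum.sub hs
  rw [Complex.ofReal_one] at hsub
  rw [← iteratedDeriv_one, iteratedDeriv_pgfC hp hp1 1 hw, ← hsub.tsum_eq, ← tsum_mul_right]
  refine tsum_of_norm_bounded (hmom.mul_right _).hasSum fun k => ?_
  have e : ((k.descFactorial 1 : ℝ) * p k : ℂ) * w ^ (k - 1) - (((k : ℝ) * p k : ℝ) : ℂ) =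
      -(((k : ℝ) * p k : ℝ) * (1 - w ^ (k - 1))) := by
    rw [Nat.descFactorial_one]
    push_cast
    ring
  rw [e, norm_neg, norm_mul, Complex.norm_real, Real.norm_of_nonneg
    (mul_nonneg (by positivity) (hp k))]
  have h1 : ‖1 - w ^ (k - 1)‖ ≤ k * ‖1 - w‖ := by
    refine (norm_one_sub_pow_le_mul hw.le _).trans ?_
    gcongr
    omega
  have h2 := sq_le_natCast_rpow_two_add hδ0 k
  have := hp k
  calc (k : ℝ) * p k * ‖1 - w ^ (k - 1)‖ ≤ (k : ℝ) * p k * (k * ‖1 - w‖) := by gcongr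
    _ = (k : ℝ) ^ 2 * p k * ‖1 - w‖ := by ring
    _ ≤ _ := by gcongr

lemma hasSum_one_of_tsum_eq_one {f : ℕ → ℝ} (h : ∑' k, f k = 1) : HasSum f 1 := by
  have hs : Summable f := by
    by_contra hf
    rw [tsum_eq_zero_of_not_summable hf] at h
    exact zero_ne_one h
  exact h ▸ hs.hasSum

lemma sqrt_norm_rpow_eq (z : ℂ) (s : ℝ) : √‖z‖ ^ s = ‖z‖ ^ (s / 2) := by
  rw [Real.sqrt_eq_rpow, ← Real.rpow_mul (norm_nonneg _)]
  congr 1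
  ring

/-- Under the standing hypotheses, there is a Δ-domain on which the tree-size
generating function `Y` is analytic with `|Y| < 1`, and on which
`Φ(Y(z)) = 1 + O(|1−z|^{1/2})`, `Φ'(Y(z)) = 1 + O(|1−z|^{1/2})`,
`Φ''(Y(z)) = σ² + O(|1−z|^{δ/2})`, and for each fixed `m ≥ 3`,
`Φ^{(m)}(Y(z)) = O(|1−z|^{δ/2+1−m/2})`. -/
theorem stmt4
    (p : ℕ → ℝ) (hp : ∀ k, 0 ≤ p k)
    (hpsum : ∑' k, p k = 1)
    (hcrit : ∑' k : ℕ, (k : ℝ) * p k = 1)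
    (hspan : ∀ d : ℕ, (∀ k, p k ≠ 0 → d ∣ k) → d = 1)
    (hσpos : 0 < ∑' k : ℕ, (k : ℝ) * ((k : ℝ) - 1) * p k)
    (δ : ℝ) (hδ0 : 0 < δ) (hδ1 : δ ≤ 1)
    (hmom : Summable (fun k : ℕ => (k : ℝ) ^ ((2:ℝ) + δ) * p k))
    (q : ℕ → ℝ) (hq0 : q 0 = 0) (hqnn : ∀ n, 0 ≤ q n)
    (hqsum : ∑' n, q n = 1)
    (hfix : ∀ z ∈ Set.Icc (0:ℝ) 1,
      (∑' n, q n * z ^ n) = z * ∑' k, p k * (∑' n, q n * z ^ n) ^ k) :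
    ∃ (R θ : ℝ) (Y : ℂ → ℂ), 1 < R ∧ θ ∈ Set.Ioo 0 (Real.pi / 2) ∧
      (∀ z : ℂ, ‖z‖ < 1 → Y z = ∑' n : ℕ, (q n : ℂ) * z ^ n) ∧
      DifferentiableOn ℂ Y (deltaDom R θ) ∧
      (∀ z ∈ deltaDom R θ, ‖Y z‖ < 1) ∧
      (∃ C : ℝ, ∀ z ∈ deltaDom R θ,
        ‖pgfC p (Y z) - 1‖ ≤ C * ‖1 - z‖ ^ ((1:ℝ)/2) ∧
        ‖deriv (pgfC p) (Y z) - 1‖ ≤ C * ‖1 - z‖ ^ ((1:ℝ)/2) ∧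
        ‖iteratedDeriv 2 (pgfC p) (Y z) -
            ((∑' k : ℕ, (k : ℝ) * ((k : ℝ) - 1) * p k : ℝ) : ℂ)‖ ≤ C * ‖1 - z‖ ^ (δ/2)) ∧
      (∀ m : ℕ, 3 ≤ m → ∃ C : ℝ, ∀ z ∈ deltaDom R θ,
        ‖iteratedDeriv m (pgfC p) (Y z)‖ ≤ C * ‖1 - z‖ ^ (δ/2 + 1 - (m : ℝ)/2)) := by
  have hs := hasSum_one_of_tsum_eq_one hpsum
  have hs1 := hasSum_one_of_tsum_eq_one hcrit
  have hqs := hasSum_one_of_tsum_eq_one hqsum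
  have hp1 : ∀ k, p k ≤ 1 := fun k => le_hasSum hs k fun j _ => hp j
  have hq1 : ∀ n, q n ≤ 1 := fun n => le_hasSum hqs n fun j _ => hqnn j
  obtain ⟨n, hn, hpn⟩ : ∃ n, 2 ≤ n ∧ 0 < p n := by
    by_contra! hcon
    refine hσpos.ne' ((tsum_congr fun k => ?_).trans tsum_zero)
    rcases lt_or_ge k 2 with hk | hk
    · interval_cases k <;> simp
    · rw [le_antisymm (hcon k hk) (hp k), mul_zero]
  have hp0 : 0 < p 0 := pos_zero_of_critical hp hs hs1 hn hpn
  set S := ∑' k : ℕ, (k : ℝ) * ((k : ℝ) - 1) * p k with hS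
  set T := ∑' k : ℕ, (k : ℝ) ^ ((2:ℝ) + δ) * p k with hT
  have hT0 : 0 ≤ T := tsum_nonneg fun k => mul_nonneg (by positivity) (hp k)
  have h1 : pgfC p 1 = 1 := pgfC_one hs
  have hL : ∀ a b : ℂ, ‖a‖ ≤ 1 → ‖b‖ ≤ 1 → ‖pgfC p a - pgfC p b‖ ≤ ‖a - b‖ := by
    intro a b ha hb
    simpa [hcrit] using norm_pgfC_sub_le hp hs.summable hs1.summable le_rfl ha hb
  have hρ : ∀ x : ℝ, 0 ≤ x → x < 1 → ∃ ρ : ℝ, 0 ≤ ρ ∧ ρ < 1 ∧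
      ∀ a b : ℂ, ‖a‖ ≤ x → ‖b‖ ≤ 1 → ‖pgfC p a - pgfC p b‖ ≤ ρ * ‖a - b‖ :=
    fun x hx0 hx1 => ⟨_, tsum_nonneg fun k => mul_nonneg (by positivity) (hp k),
      tsum_geom_mul_lt_one hp hs1 hn hpn hx0 hx1,
      fun a b ha hb => norm_pgfC_sub_le hp hs.summable hs1.summable hx1.le ha hb⟩
  have hE : ∃ t > 0, ∀ M ≤ t, ∀ a b : ℂ, ‖a‖ ≤ 1 → ‖b‖ ≤ 1 → ‖1 - a‖ ≤ M → ‖1 - b‖ ≤ M →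
      ‖(pgfC p a - a - (S / 2 : ℝ) * (1 - a) ^ 2) -
        (pgfC p b - b - (S / 2 : ℝ) * (1 - b) ^ 2)‖ ≤ S / 2 / 16 * M * ‖a - b‖ := by
    have hlim : Tendsto (fun t : ℝ => 2 * T * t ^ δ) (𝓝[>] 0) (𝓝 0) := by
      have := ((Real.continuousAt_rpow_const 0 δ (Or.inr hδ0.le)).tendsto.const_mul
        (2 * T)).mono_left (nhdsWithin_le_nhds (s := Ioi 0))
      rwa [Real.zero_rpow hδ0.ne', mul_zero] at this
    have hev := hlim.eventually_lt_const (show 0 < S / 2 / 16 by positivity)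
    obtain ⟨t, ht, ht0⟩ := (hev.and self_mem_nhdsWithin).exists
    refine ⟨t, ht0, fun M hM a b ha hb haM hbM => ?_⟩
    have hM0 : 0 ≤ M := (norm_nonneg _).trans haM
    have e := norm_pgfC_taylor_sub_le hp hs hs1 hδ0 hδ1 hmom ha hb haM hbM
    refine e.trans ?_
    have e2 : 2 * T * M ^ δ ≤ S / 2 / 16 :=
      (mul_le_mul_of_nonneg_left (Real.rpow_le_rpow hM0 hM hδ0.le) (by positivity)).trans ht.le
    refine mul_le_mul_of_nonneg_right ?_ (norm_nonneg _)
    calc 2 * T * (M * M ^ δ) = 2 * T * M ^ δ * M := by ring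
      _ ≤ _ := by gcongr
  have hy : ∀ z : ℂ, ‖z‖ ≤ 1 → pgfC q z = z * pgfC p (pgfC q z) := fun z hz =>
    pgfC_eq_mul_pgfC hp hs hp1 hq0 hqnn hqs hq1 hfix hz
  have hy1 : ∀ z : ℂ, ‖z‖ ≤ 1 → z ≠ 1 → ‖pgfC q z‖ < 1 := by
    intro z hz hz1
    have hle := norm_pgfC_le_norm hq0 hqnn hqs hz
    refine (hle.trans hz).lt_of_ne fun hcon => hz1 ?_
    have hnz : ‖z‖ = 1 := le_antisymm hz (hcon ▸ hle)
    have hΦ : ‖pgfC p (pgfC q z)‖ = 1 := by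
      have := congrArg norm (hy z hz)
      rwa [norm_mul, hnz, one_mul, hcon, eq_comm] at this
    have hw := eq_one_of_norm_pgfC_eq_one hp hs hspan hp0.ne' hcon.le hΦ
    have := hy z hz
    rw [hw, h1, mul_one] at this
    exact this.symm
  obtain ⟨R, c, C, Y, hR, hc, hC, hYd, hY⟩ := exists_deltaDom_extension (β := S / 2)
    (differentiableOn_pgfC hp hp1) (by rw [pgfC_zero]; exact_mod_cast hp0.ne') h1 (by positivity)
    hL hρ hE (continuousOn_pgfC hqnn hqs.summable) hy hy1
  have hsqrt : ∀ z : ℂ, ‖1 - z‖ ^ ((1 : ℝ) / 2) = √‖1 - z‖ := fun z => (Real.sqrt_eq_rpow _).symm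
  refine ⟨R, Real.pi / 3, Y, hR, ⟨by positivity, by linarith [Real.pi_pos]⟩, fun z hz => ?_, hYd,
    fun z hz => (hY z hz).1, ⟨C + T * C + 2 * T * C ^ δ, fun z hz => ?_⟩, fun m hm => ?_⟩
  · have hzd : z ∈ deltaDom R (Real.pi / 3) := by
      rw [deltaDom_pi_div_three]
      refine ⟨hz.trans hR, ?_⟩
      have e1 := Complex.re_le_norm z
      have e2 : (z - 1).re < 0 := by
        rw [Complex.sub_re, Complex.one_re]
        linarith
      exact e2.trans_le (by positivity)
    obtain ⟨hY1, hYe, -⟩ := hY z hzd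
    have e1 := hL (Y z) (pgfC q z) hY1.le ((norm_pgfC_le_norm hq0 hqnn hqs hz.le).trans hz.le)
    have e2 : Y z - pgfC q z = z * (pgfC p (Y z) - pgfC p (pgfC q z)) := by
      rw [mul_sub, ← hYe, ← hy z hz.le]
    have e3 : ‖Y z - pgfC q z‖ = ‖z‖ * ‖pgfC p (Y z) - pgfC p (pgfC q z)‖ := by
      rw [← norm_mul, ← e2]
    have e4 : ‖Y z - pgfC q z‖ = 0 := by
      have := norm_nonneg z
      have := norm_nonneg (Y z - pgfC q z)
      have : ‖Y z - pgfC q z‖ ≤ ‖z‖ * ‖Y z - pgfC q z‖ := by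
        rw [e3] at e1 ⊢
        gcongr
      nlinarith
    exact sub_eq_zero.1 (norm_eq_zero.1 e4)
  · obtain ⟨hY1, -, -, hYC⟩ := hY z hz
    have hs0 := Real.sqrt_nonneg ‖1 - z‖
    have hCδ : 0 ≤ C ^ δ := Real.rpow_nonneg hC δ
    rw [hsqrt]
    refine ⟨?_, ?_, ?_⟩
    · have e := hL (Y z) 1 hY1.le (by simp)
      rw [h1, norm_sub_rev (Y z)] at e
      refine (e.trans hYC).trans (mul_le_mul_of_nonneg_right ?_ hs0)
      have : 0 ≤ T * C := by positivity
      have : 0 ≤ 2 * T * C ^ δ := by positivity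
      linarith
    · have e := norm_deriv_pgfC_sub_one_le hp hp1 hs1 hδ0 hmom hY1
      calc _ ≤ T * ‖1 - Y z‖ := e
        _ ≤ T * (C * √‖1 - z‖) := by gcongr
        _ = T * C * √‖1 - z‖ := by ring
        _ ≤ _ := by
          refine mul_le_mul_of_nonneg_right ?_ hs0
          have : 0 ≤ 2 * T * C ^ δ := by positivity
          linarith
    · have e := norm_iteratedDeriv_two_pgfC_sub_le hp hp1 hδ0 hδ1 hmom hY1
      calc _ ≤ 2 * T * ‖1 - Y z‖ ^ δ := e
        _ ≤ 2 * T * (C * √‖1 - z‖) ^ δ := by gcongr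
        _ = 2 * T * C ^ δ * ‖1 - z‖ ^ (δ / 2) := by
          rw [Real.mul_rpow hC hs0, sqrt_norm_rpow_eq, mul_assoc (2 * T)]
        _ ≤ _ := by
          refine mul_le_mul_of_nonneg_right ?_ (by positivity)
          have : 0 ≤ T * C := by positivity
          linarith
  · obtain ⟨K, hK0, hK⟩ := exists_norm_iteratedDeriv_pgfC_le hp hp1 hδ1 hmom hm
    refine ⟨K * c ^ (2 + δ - m), fun z hz => ?_⟩
    obtain ⟨hY1, -, hYc, -⟩ := hY z hz
    have hm' : (3 : ℝ) ≤ m := by exact_mod_cast hm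
    have hs0 : 0 < √‖1 - z‖ :=
      Real.sqrt_pos.2 (norm_pos_iff.2 (sub_ne_zero.2 (Ne.symm hz.2.1)))
    calc _ ≤ K * (1 - ‖Y z‖) ^ (2 + δ - m) := hK _ hY1
      _ ≤ K * (c * √‖1 - z‖) ^ (2 + δ - m) :=
        mul_le_mul_of_nonneg_left
          (Real.rpow_le_rpow_of_nonpos (by positivity) hYc (by linarith)) hK0
      _ = K * c ^ (2 + δ - m) * ‖1 - z‖ ^ (δ / 2 + 1 - (m : ℝ) / 2) := by
        rw [Real.mul_rpow hc.le hs0.le, sqrt_norm_rpow_eq, mul_assoc]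
        congr 3
        ring
end

section
/- Let (p_k)_{k≥0} be a critical offspring distribution with variance σ² ∈ (0,∞) and pgf Φ. Then μ′ = ∑_{n≥1} q_n·log n is finite and satisfies μ′ = −γ − ∫_0^1 log log(Φ(η)/η) dη, where γ is Euler's constant. -/
open MeasureTheory Set Filter

/-- The derivative of `Γ` at `1`, as an integral. -/
theorem integral_log_mul_exp_neg_Ioi :
    ∫ t in Ioi (0 : ℝ), Real.log t * Real.exp (-t) = -Real.eulerMascheroniConstant := by
  have h1 : HasDerivAt Complex.GammaIntegral
      (∫ t in Ioi (0 : ℝ), (t : ℂ) ^ ((1 : ℂ) - 1) * (Real.log t * Real.exp (-t))) 1 :=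
    Complex.hasDerivAt_GammaIntegral (by simp)
  have h2 : HasDerivAt Complex.GammaIntegral (-(Real.eulerMascheroniConstant : ℂ)) 1 := by
    refine Complex.hasDerivAt_Gamma_one.congr_of_eventuallyEq ?_
    filter_upwards [(isOpen_lt continuous_const Complex.continuous_re).mem_nhds
      (show (0 : ℝ) < (1 : ℂ).re by simp)] with s hs
    exact (Complex.Gamma_eq_integral hs).symm
  have h3 := h1.unique h2
  simp only [sub_self, Complex.cpow_zero, one_mul] at h3
  rw [← Complex.ofReal_inj, ← integral_complex_ofReal]
  simpa using h3

theorem image_exp_neg_Ioi : (fun t : ℝ => Real.exp (-t)) '' Ioi 0 = Ioo 0 1 := by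
  ext w
  constructor
  · rintro ⟨t, ht, rfl⟩
    exact ⟨Real.exp_pos _, by simpa using ht⟩
  · rintro ⟨h0, h1⟩
    exact ⟨-Real.log w, by simpa using Real.log_neg h0 h1, by simp [Real.exp_log h0]⟩

theorem integral_log_neg_log_Ioo :
    ∫ w in Ioo (0 : ℝ) 1, Real.log (-Real.log w) = -Real.eulerMascheroniConstant := by
  rw [← image_exp_neg_Ioi, integral_image_eq_integral_abs_deriv_smul
    (f := fun t => Real.exp (-t)) (f' := fun t => -Real.exp (-t)) measurableSet_Ioi
    (fun x _ => by simpa using ((hasDerivAt_neg x).exp).hasDerivWithinAt)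
    (fun x _ y _ h => by simpa using h), ← integral_log_mul_exp_neg_Ioi]
  refine integral_congr_ae (ae_of_all _ fun t => ?_)
  simp [mul_comm]

theorem integrableOn_log_neg_log_Ioo :
    IntegrableOn (fun w => Real.log (-Real.log w)) (Ioo (0 : ℝ) 1) := by
  refine not_imp_comm.1 integral_undef ?_
  rw [integral_log_neg_log_Ioo]
  linarith [Real.one_half_lt_eulerMascheroniConstant]

theorem image_pow_Ioo {n : ℕ} (hn : n ≠ 0) : (fun z : ℝ => z ^ n) '' Ioo 0 1 = Ioo 0 1 := by
  ext w
  constructor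
  · rintro ⟨z, hz, rfl⟩
    exact ⟨pow_pos hz.1 n, pow_lt_one₀ hz.1.le hz.2 hn⟩
  · rintro ⟨h0, h1⟩
    refine ⟨w ^ (n⁻¹ : ℝ), ⟨Real.rpow_pos_of_pos h0 _, Real.rpow_lt_one h0.le h1 ?_⟩,
      Real.rpow_inv_natCast_pow h0.le hn⟩
    positivity

/-- Expectation of `log (E / n)` for `E` standard exponential, in the variable `z = exp (-E / n)`,
with the integrability that makes it meaningful. -/
theorem integral_deriv_pow_mul_log_neg_log {n : ℕ} (hn : n ≠ 0) :
    IntegrableOn (fun z => (n * z ^ (n - 1)) * Real.log (-Real.log z)) (Ioo (0 : ℝ) 1) ∧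
    ∫ z in Ioo (0 : ℝ) 1, (n * z ^ (n - 1)) * Real.log (-Real.log z) =
      -Real.eulerMascheroniConstant - Real.log n := by
  have hconst : IntegrableOn (fun _ : ℝ => Real.log n) (Ioo (0 : ℝ) 1) := by simp
  have hder : ∀ x ∈ Ioo (0 : ℝ) 1,
      HasDerivWithinAt (fun z : ℝ => z ^ n) (n * x ^ (n - 1)) (Ioo 0 1) x :=
    fun x _ => (hasDerivAt_pow n x).hasDerivWithinAt
  have hinj : InjOn (fun z : ℝ => z ^ n) (Ioo 0 1) :=
    fun x hx y hy h => (pow_left_inj₀ hx.1.le hy.1.le hn).1 h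
  have hcongr : ∀ z ∈ Ioo (0 : ℝ) 1,
      |n * z ^ (n - 1)| • (Real.log (-Real.log (z ^ n)) - Real.log n) =
        (n * z ^ (n - 1)) * Real.log (-Real.log z) := by
    intro z hz
    have hl : -Real.log z ≠ 0 := by linarith [Real.log_neg hz.1 hz.2]
    have hz0 := hz.1
    rw [abs_of_nonneg (by positivity), Real.log_pow, ← mul_neg,
      Real.log_mul (by exact_mod_cast hn) hl, smul_eq_mul]
    ring
  have hint := integrableOn_log_neg_log_Ioo.sub hconst
  constructor
  · rw [← image_pow_Ioo hn] at hint
    refine ((integrableOn_image_iff_integrableOn_abs_deriv_smul measurableSet_Ioo hder hinj _).1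
      hint).congr_fun hcongr measurableSet_Ioo
  · rw [← setIntegral_congr_fun measurableSet_Ioo hcongr,
      ← integral_image_eq_integral_abs_deriv_smul measurableSet_Ioo hder hinj
        (fun w => Real.log (-Real.log w) - Real.log n), image_pow_Ioo hn,
      integral_sub integrableOn_log_neg_log_Ioo hconst, integral_log_neg_log_Ioo]
    simp

theorem summable_of_tsum_eq_one {f : ℕ → ℝ} (h : ∑' n, f n = 1) : Summable f :=
  not_imp_comm.1 tsum_eq_zero_of_not_summable (by simp [h])

section PowerSeries

variable {q : ℕ → ℝ}

theorem norm_mul_pow_le (hqnn : ∀ n, 0 ≤ q n) (n : ℕ) {z : ℝ} (hz : z ∈ Icc (0 : ℝ) 1) :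
    ‖q n * z ^ n‖ ≤ q n := by
  have hz0 := hz.1
  have := hqnn n
  rw [Real.norm_of_nonneg (by positivity)]
  exact mul_le_of_le_one_right this (pow_le_one₀ hz.1 hz.2)

theorem summable_mul_pow_s6 (hqnn : ∀ n, 0 ≤ q n) (hq : Summable q) {z : ℝ}
    (hz : z ∈ Icc (0 : ℝ) 1) : Summable fun n => q n * z ^ n :=
  .of_norm_bounded hq fun n => norm_mul_pow_le hqnn n hz

theorem continuousOn_tsum_mul_pow (hqnn : ∀ n, 0 ≤ q n) (hq : Summable q) :
    ContinuousOn (fun z : ℝ => ∑' n, q n * z ^ n) (Icc 0 1) :=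
  continuousOn_tsum (fun n => by fun_prop) hq fun n _ hz => norm_mul_pow_le hqnn n hz

theorem summable_mul_deriv_pow (hqnn : ∀ n, 0 ≤ q n) (hq : Summable q) {z : ℝ}
    (hz : z ∈ Ico (0 : ℝ) 1) : Summable fun n => q n * (n * z ^ (n - 1)) := by
  have hz0 := hz.1
  have h1 : Summable fun n : ℕ => (n : ℝ) * z ^ (n - 1) := by
    rw [← summable_nat_add_iff 1]
    have ha := summable_pow_mul_geometric_of_norm_lt_one 1
      (show ‖z‖ < 1 by rw [Real.norm_of_nonneg hz.1]; exact hz.2)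
    have hb := summable_geometric_of_lt_one hz.1 hz.2
    refine (ha.add hb).congr fun n => ?_
    push_cast
    simp
    ring
  refine .of_nonneg_of_le (fun n => ?_) (fun n => ?_) (h1.mul_left (∑' n, q n))
  · have := hqnn n
    positivity
  · exact mul_le_mul_of_nonneg_right (hq.le_tsum n fun j _ => hqnn j) (by positivity)

theorem hasDerivAt_tsum_mul_pow (hqnn : ∀ n, 0 ≤ q n) (hq : Summable q) {z : ℝ}
    (hz : z ∈ Ioo (0 : ℝ) 1) :
    HasDerivAt (fun z : ℝ => ∑' n, q n * z ^ n) (∑' n, q n * (n * z ^ (n - 1))) z := by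
  obtain ⟨r, hzr, hr1⟩ := exists_between hz.2
  have hr0 : 0 < r := hz.1.trans hzr
  refine hasDerivAt_tsum_of_isPreconnected (t := Ioo 0 r)
    (summable_mul_deriv_pow hqnn hq ⟨hr0.le, hr1⟩) isOpen_Ioo isPreconnected_Ioo
    (fun n y _ => (hasDerivAt_pow n y).const_mul (q n)) (fun n y hy => ?_) ⟨hz.1, hzr⟩
    (summable_mul_pow_s6 hqnn hq ⟨hz.1.le, hz.2.le⟩) ⟨hz.1, hzr⟩
  have hy0 := hy.1
  have := hqnn n
  rw [Real.norm_of_nonneg (by positivity)]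
  gcongr
  exact hy.2.le

theorem strictMonoOn_tsum_mul_pow (hqnn : ∀ n, 0 ≤ q n) (hq : Summable q) {m : ℕ} (hm : m ≠ 0)
    (hqm : 0 < q m) : StrictMonoOn (fun z : ℝ => ∑' n, q n * z ^ n) (Icc 0 1) := by
  intro x hx y hy hxy
  refine Summable.tsum_lt_tsum (i := m) (fun n => ?_) ?_ (summable_mul_pow_s6 hqnn hq hx)
    (summable_mul_pow_s6 hqnn hq hy)
  · exact mul_le_mul_of_nonneg_left (pow_le_pow_left₀ hx.1 hxy.le n) (hqnn n)
  · exact mul_lt_mul_of_pos_left (pow_lt_pow_left₀ hxy hx.1 hm) hqm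

/-- A probability generating function without constant term, that is, of a law on the positive
integers, is an increasing bijection of the open unit interval. -/
theorem image_tsum_mul_pow_Ioo (hqnn : ∀ n, 0 ≤ q n) (hq0 : q 0 = 0) (hqsum : ∑' n, q n = 1) :
    InjOn (fun z : ℝ => ∑' n, q n * z ^ n) (Ioo 0 1) ∧
    (fun z : ℝ => ∑' n, q n * z ^ n) '' Ioo 0 1 = Ioo 0 1 := by
  have hq := summable_of_tsum_eq_one hqsum
  obtain ⟨m, hm⟩ : ∃ m, q m ≠ 0 := by
    by_contra! h
    simp [h] at hqsum
  have hm0 : m ≠ 0 := fun h => hm (h ▸ hq0)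
  have hmono := strictMonoOn_tsum_mul_pow hqnn hq hm0 ((hqnn m).lt_of_ne' hm)
  have hY0 : (fun z : ℝ => ∑' n, q n * z ^ n) 0 = 0 := by
    show ∑' n, q n * (0 : ℝ) ^ n = 0
    rw [tsum_eq_single 0 (fun n hn => by simp [hn])]
    simp [hq0]
  have hY1 : (fun z : ℝ => ∑' n, q n * z ^ n) 1 = 1 := by simpa using hqsum
  refine ⟨hmono.injOn.mono Ioo_subset_Icc_self, Subset.antisymm ?_ ?_⟩
  · rintro _ ⟨z, hz, rfl⟩
    constructor
    · rw [← hY0]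
      exact hmono (by simp) (Ioo_subset_Icc_self hz) hz.1
    · rw [← hY1]
      exact hmono (Ioo_subset_Icc_self hz) (by simp) hz.2
  · have h := intermediate_value_Ioo zero_le_one (continuousOn_tsum_mul_pow hqnn hq)
    beta_reduce at hY0 hY1
    rwa [hY0, hY1] at h

end PowerSeries

theorem one_sub_sq_le_pow_sub_tangent {k : ℕ} (hk : 2 ≤ k) {x : ℝ} (hx : x ∈ Icc (0 : ℝ) 1) :
    (1 - x) ^ 2 ≤ x ^ k - 1 - k * (x - 1) := by
  obtain ⟨hx0, hx1⟩ := hx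
  induction k, hk using Nat.le_induction with
  | base => push_cast; linarith [sq_nonneg (1 - x)]
  | succ k _ ih =>
    have h : 0 ≤ (1 - x ^ k) * (1 - x) :=
      mul_nonneg (sub_nonneg.2 (pow_le_one₀ hx0 hx1)) (sub_nonneg.2 hx1)
    push_cast
    rw [pow_succ x k]
    linarith

section Offspring

variable {p : ℕ → ℝ}

/-- The generating function of a critical, nondegenerate offspring distribution lies above the
diagonal by at least a quadratic amount. -/
theorem exists_mul_sq_le_pgf_sub (hp : ∀ k, 0 ≤ p k) (hpsum : ∑' k, p k = 1)
    (hcrit : ∑' k : ℕ, (k : ℝ) * p k = 1)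
    (hσpos : 0 < ∑' k : ℕ, (k : ℝ) * ((k : ℝ) - 1) * p k) :
    ∃ c > 0, ∀ x ∈ Icc (0 : ℝ) 1, c * (1 - x) ^ 2 ≤ (∑' k, p k * x ^ k) - x := by
  obtain ⟨k, hk2, hk⟩ : ∃ k, 2 ≤ k ∧ 0 < p k := by
    by_contra! h
    refine hσpos.ne' ((tsum_congr fun k => ?_).trans tsum_zero)
    rcases lt_or_ge k 2 with hk | hk
    · interval_cases k <;> simp
    · simp [le_antisymm (h k hk) (hp k)]
  refine ⟨p k, hk, fun x hx => ?_⟩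
  have hs := (((summable_mul_pow_s6 hp (summable_of_tsum_eq_one hpsum) hx).hasSum.sub
    (hpsum ▸ (summable_of_tsum_eq_one hpsum).hasSum)).sub
    ((hcrit ▸ (summable_of_tsum_eq_one hcrit).hasSum).mul_right (x - 1)))
  have hterm (j : ℕ) : 0 ≤ p j * x ^ j - p j - j * p j * (x - 1) := by
    have h : 0 ≤ x ^ j - 1 - j * (x - 1) := by
      rcases lt_or_ge j 2 with hj | hj
      · interval_cases j <;> simp
      · exact (sq_nonneg _).trans (one_sub_sq_le_pow_sub_tangent hj hx)
    nlinarith [mul_nonneg (hp j) h]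
  have h1 := le_hasSum hs k fun j _ => hterm j
  have h2 := mul_le_mul_of_nonneg_left (one_sub_sq_le_pow_sub_tangent hk2 hx) hk.le
  linarith

theorem integrableOn_log_log_pgf_div (hp : ∀ k, 0 ≤ p k) (hpsum : ∑' k, p k = 1)
    (hcrit : ∑' k : ℕ, (k : ℝ) * p k = 1)
    (hσpos : 0 < ∑' k : ℕ, (k : ℝ) * ((k : ℝ) - 1) * p k) :
    IntegrableOn (fun x => Real.log (Real.log ((∑' k, p k * x ^ k) / x))) (Ioo (0 : ℝ) 1) := by
  have hps := summable_of_tsum_eq_one hpsum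
  obtain ⟨c, hc, hlow⟩ := exists_mul_sq_le_pgf_sub hp hpsum hcrit hσpos
  have hle1 {x : ℝ} (hx : x ∈ Icc (0 : ℝ) 1) : ∑' k, p k * x ^ k ≤ 1 := by
    rw [← hpsum]
    exact (summable_mul_pow_s6 hp hps hx).tsum_le_tsum
      (fun k => (le_abs_self _).trans (norm_mul_pow_le hp k hx)) hps
  have hgt {x : ℝ} (hx : x ∈ Ioo (0 : ℝ) 1) : x < ∑' k, p k * x ^ k := by
    have h := hlow x (Ioo_subset_Icc_self hx)
    have : 0 < c * (1 - x) ^ 2 := mul_pos hc (pow_pos (sub_pos.2 hx.2) 2)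
    linarith
  have hloglow {x : ℝ} (hx : x ∈ Ioo (0 : ℝ) 1) :
      c * (1 - x) ^ 2 ≤ Real.log ((∑' k, p k * x ^ k) / x) := by
    have hx0 := hx.1
    have hΦ : 0 < ∑' k, p k * x ^ k := hx0.trans (hgt hx)
    refine le_trans ?_ (Real.one_sub_inv_le_log_of_pos (div_pos hΦ hx0))
    rw [inv_div, one_sub_div hΦ.ne', le_div_iff₀ hΦ]
    have h := hlow x (Ioo_subset_Icc_self hx)
    have : 0 ≤ c * (1 - x) ^ 2 := by positivity
    nlinarith [hle1 (Ioo_subset_Icc_self hx)]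
  have hlogpos {x : ℝ} (hx : x ∈ Ioo (0 : ℝ) 1) : 0 < Real.log ((∑' k, p k * x ^ k) / x) :=
    (mul_pos hc (pow_pos (sub_pos.2 hx.2) 2)).trans_le (hloglow hx)
  have hlogup {x : ℝ} (hx : x ∈ Ioo (0 : ℝ) 1) :
      Real.log ((∑' k, p k * x ^ k) / x) ≤ -Real.log x := by
    rw [← Real.log_inv, inv_eq_one_div]
    have hx0 := hx.1
    have hΦ : 0 < ∑' k, p k * x ^ k := hx0.trans (hgt hx)
    exact Real.log_le_log (div_pos hΦ hx0)
      (div_le_div_of_nonneg_right (hle1 (Ioo_subset_Icc_self hx)) hx0.le)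
  have hcont : ContinuousOn (fun x => Real.log (Real.log ((∑' k, p k * x ^ k) / x)))
      (Ioo (0 : ℝ) 1) := by
    refine ContinuousOn.log (ContinuousOn.log (((continuousOn_tsum_mul_pow hp hps).mono
      Ioo_subset_Icc_self).div continuousOn_id fun x hx => hx.1.ne') fun x hx => ?_)
      fun x hx => (hlogpos hx).ne'
    exact (div_pos (hx.1.trans (hgt hx)) hx.1).ne'
  have hlog : IntegrableOn Real.log (Ioo 0 1) :=
    ((intervalIntegrable_iff_integrableOn_Ioo_of_le zero_le_one).1
      intervalIntegral.intervalIntegrable_log')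
  have hlog' : IntegrableOn (fun x : ℝ => Real.log (1 - x)) (Ioo 0 1) := by
    refine (intervalIntegrable_iff_integrableOn_Ioo_of_le zero_le_one).1 ?_
    have h := (intervalIntegral.intervalIntegrable_log' (a := 1) (b := 0)).comp_sub_left 1
    simpa using h
  have hbound : IntegrableOn
      (fun x : ℝ => |Real.log c| + 2 * |Real.log (1 - x)| + |Real.log x|) (Ioo 0 1) :=
    ((integrable_const _).add (hlog'.abs.const_mul 2)).add hlog.abs
  refine Integrable.mono' hbound (hcont.aestronglyMeasurable measurableSet_Ioo) ?_
  refine (ae_restrict_iff' measurableSet_Ioo).2 (ae_of_all _ fun x hx => ?_)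
  have hx1 : 0 < 1 - x := sub_pos.2 hx.2
  have h1 := Real.log_le_log (by positivity) (hloglow hx)
  have h2 := (Real.log_le_sub_one_of_pos (hlogpos hx)).trans (sub_le_sub_right (hlogup hx) 1)
  rw [Real.log_mul hc.ne' (by positivity), Real.log_pow] at h1
  push_cast at h1
  rw [Real.norm_eq_abs, abs_le]
  constructor <;>
    linarith [neg_abs_le (Real.log c), neg_abs_le (Real.log (1 - x)), neg_abs_le (Real.log x),
      abs_nonneg (Real.log c), abs_nonneg (Real.log (1 - x)), abs_nonneg (Real.log x)]

end Offspring

/-- For a critical offspring distribution with variance `σ² ∈ (0,∞)` and pgf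
`Φ`, the quantity `μ' = ∑ q_n log n` is finite and equals
`−γ − ∫_0^1 log log(Φ(η)/η) dη`, where `γ` is Euler's constant. -/
theorem stmt6
    (p : ℕ → ℝ) (hp : ∀ k, 0 ≤ p k)
    (hpsum : ∑' k, p k = 1)
    (hcrit : ∑' k : ℕ, (k : ℝ) * p k = 1)
    (hσfin : Summable (fun k : ℕ => (k : ℝ) * ((k : ℝ) - 1) * p k))
    (hσpos : 0 < ∑' k : ℕ, (k : ℝ) * ((k : ℝ) - 1) * p k)
    (q : ℕ → ℝ) (hq0 : q 0 = 0) (hqnn : ∀ n, 0 ≤ q n)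
    (hqsum : ∑' n, q n = 1)
    (hfix : ∀ z ∈ Set.Icc (0:ℝ) 1,
      (∑' n, q n * z ^ n) = z * ∑' k, p k * (∑' n, q n * z ^ n) ^ k) :
    Summable (fun n : ℕ => q n * Real.log n) ∧
    (∑' n : ℕ, q n * Real.log n) =
      - Real.eulerMascheroniConstant -
        ∫ η in (0:ℝ)..1, Real.log (Real.log ((∑' k, p k * η ^ k) / η)) := by
  have hq := summable_of_tsum_eq_one hqsum
  obtain ⟨hinj, himage⟩ := image_tsum_mul_pow_Ioo hqnn hq0 hqsum
  have hder : ∀ z ∈ Ioo (0 : ℝ) 1, HasDerivWithinAt (fun z : ℝ => ∑' n, q n * z ^ n)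
      (∑' n, q n * (n * z ^ (n - 1))) (Ioo 0 1) z :=
    fun z hz => (hasDerivAt_tsum_mul_pow hqnn hq hz).hasDerivWithinAt
  have hterm : ∀ z ∈ Ioo (0 : ℝ) 1, ∀ n : ℕ, 0 ≤ q n * (n * z ^ (n - 1)) := fun z hz n =>
    mul_nonneg (hqnn n) (mul_nonneg n.cast_nonneg (pow_nonneg hz.1.le _))
  have hsubst : ∀ z ∈ Ioo (0 : ℝ) 1,
      |∑' n, q n * (n * z ^ (n - 1))| • Real.log (Real.log
        ((∑' k, p k * (∑' n, q n * z ^ n) ^ k) / ∑' n, q n * z ^ n)) =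
      ∑' n, q n * ((n * z ^ (n - 1)) * Real.log (-Real.log z)) := by
    intro z hz
    have hY : 0 < ∑' n, q n * z ^ n := (himage.subset (mem_image_of_mem _ hz)).1
    have hdiv : (∑' k, p k * (∑' n, q n * z ^ n) ^ k) / ∑' n, q n * z ^ n = z⁻¹ := by
      have h := hfix z (Ioo_subset_Icc_self hz)
      have hz0 := hz.1.ne'
      rw [div_eq_iff hY.ne', eq_inv_mul_iff_mul_eq₀ hz0]
      exact h.symm
    rw [hdiv, Real.log_inv, abs_of_nonneg (tsum_nonneg (hterm z hz)), smul_eq_mul,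
      ← tsum_mul_right]
    simp only [mul_assoc]
  have hint : IntegrableOn
      (fun z => ∑' n, q n * ((n * z ^ (n - 1)) * Real.log (-Real.log z))) (Ioo (0 : ℝ) 1) := by
    have h := integrableOn_log_log_pgf_div hp hpsum hcrit hσpos
    rw [← himage, integrableOn_image_iff_integrableOn_abs_deriv_smul measurableSet_Ioo hder
      hinj] at h
    exact h.congr_fun hsubst measurableSet_Ioo
  have hFint (n : ℕ) : IntegrableOn
      (fun z => q n * ((n * z ^ (n - 1)) * Real.log (-Real.log z))) (Ioo (0 : ℝ) 1) := by
    rcases eq_or_ne n 0 with rfl | hn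
    · simp
    · exact (integral_deriv_pow_mul_log_neg_log hn).1.const_mul _
  have hFval (n : ℕ) : ∫ z in Ioo (0 : ℝ) 1,
      q n * ((n * z ^ (n - 1)) * Real.log (-Real.log z)) =
        q n * (-Real.eulerMascheroniConstant - Real.log n) := by
    rcases eq_or_ne n 0 with rfl | hn
    · simp [hq0]
    · rw [integral_const_mul, (integral_deriv_pow_mul_log_neg_log hn).2]
  have hnorm : Summable fun n => ∫ z in Ioo (0 : ℝ) 1,
      ‖q n * ((n * z ^ (n - 1)) * Real.log (-Real.log z))‖ := by
    refine summable_of_sum_le (c := ∫ z in Ioo (0 : ℝ) 1,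
      ‖∑' n, q n * ((n * z ^ (n - 1)) * Real.log (-Real.log z))‖)
      (fun n => integral_nonneg fun z => norm_nonneg _) fun u =>
      (integral_finsetSum u fun n _ => (hFint n).norm).symm.trans_le ?_
    refine setIntegral_mono_on (integrable_finsetSum u fun n _ => (hFint n).norm) hint.norm
      measurableSet_Ioo fun z hz => ?_
    have hs := summable_mul_deriv_pow hqnn hq (Ioo_subset_Ico_self hz)
    simp only [← mul_assoc (q _) (_ * _)]
    rw [tsum_mul_right, norm_mul, Real.norm_of_nonneg (tsum_nonneg (hterm z hz))]
    simp only [norm_mul _ (Real.log (-Real.log z)), Real.norm_of_nonneg (hterm z hz _)]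
    rw [← Finset.sum_mul]
    exact mul_le_mul_of_nonneg_right (hs.sum_le_tsum u fun n _ => hterm z hz n) (norm_nonneg _)
  have hsum := hasSum_integral_of_summable_integral_norm hFint hnorm
  simp only [hFval] at hsum
  have hmain : ∫ z in Ioo (0 : ℝ) 1,
      ∑' n, q n * ((n * z ^ (n - 1)) * Real.log (-Real.log z)) =
        ∫ η in (0:ℝ)..1, Real.log (Real.log ((∑' k, p k * η ^ k) / η)) := by
    rw [intervalIntegral.integral_of_le zero_le_one, integral_Ioc_eq_integral_Ioo]
    conv_rhs => rw [← himage]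
    rw [integral_image_eq_integral_abs_deriv_smul measurableSet_Ioo hder hinj]
    exact (setIntegral_congr_fun measurableSet_Ioo hsubst).symm
  rw [hmain] at hsum
  have hfinal : HasSum (fun n : ℕ => q n * Real.log n)
      (-Real.eulerMascheroniConstant -
        ∫ η in (0:ℝ)..1, Real.log (Real.log ((∑' k, p k * η ^ k) / η))) := by
    have h := ((hqsum ▸ hq.hasSum).mul_right (-Real.eulerMascheroniConstant)).sub hsum
    rw [one_mul] at h
    have hfun : (fun n : ℕ => q n * Real.log n) = fun n => q n * -Real.eulerMascheroniConstant -
        q n * (-Real.eulerMascheroniConstant - Real.log n) := funext fun n => by ring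
    rwa [hfun]
  exact ⟨hfinal.summable, hfinal.tsum_eq⟩
end

section
/- Let (p_k^{(1)}) and (p_k^{(2)}) be critical offspring distributions, each with p_1 < 1, with pgfs Φ_1, Φ_2 and tree-size probabilities (q_n^{(1)}), (q_n^{(2)}). Then the strict inequalities ∑_{n≥1} q_n^{(1)} (n−1+t)^{−m} < ∑_{n≥1} q_n^{(2)} (n−1+t)^{−m} hold for all integers m ≥ 1 and all real t > 0 if and only if Φ_1(t) ≤ Φ_2(t) for all t ∈ (0,1) with strict inequality for at least one t ∈ (0,1). -/
open MeasureTheory Set Filter Topology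

/-- The generating function `∑ a k * t ^ k` of a real sequence `a`. -/
noncomputable def genFun (a : ℕ → ℝ) (t : ℝ) : ℝ := ∑' k, a k * t ^ k

lemma summable_mul_of_mem_Icc {a u : ℕ → ℝ} (ha : ∀ k, 0 ≤ a k) (hs : Summable a)
    (hu : ∀ k, a k ≠ 0 → u k ∈ Icc (0 : ℝ) 1) : Summable fun k => a k * u k := by
  refine Summable.of_norm_bounded hs fun k => ?_
  by_cases h : a k = 0
  · simp [h]
  · rw [Real.norm_of_nonneg (mul_nonneg (ha k) (hu k h).1)]
    exact mul_le_of_le_one_right (ha k) (hu k h).2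

lemma summable_mul_pow_s10 {a : ℕ → ℝ} (ha : ∀ k, 0 ≤ a k) (hs : Summable a) {t : ℝ}
    (ht : t ∈ Icc (0 : ℝ) 1) : Summable fun k => a k * t ^ k :=
  summable_mul_of_mem_Icc ha hs fun k _ => ⟨pow_nonneg ht.1 k, pow_le_one₀ ht.1 ht.2⟩

lemma continuousOn_genFun {a : ℕ → ℝ} (ha : ∀ k, 0 ≤ a k) (hs : Summable a) :
    ContinuousOn (genFun a) (Icc 0 1) := by
  refine continuousOn_tsum (fun k => by fun_prop) hs fun k t ht => ?_
  rw [Real.norm_of_nonneg (mul_nonneg (ha k) (pow_nonneg ht.1 k))]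
  exact mul_le_of_le_one_right (ha k) (pow_le_one₀ ht.1 ht.2)

lemma summable_of_tsum_eq_one_s10 {a : ℕ → ℝ} (h : ∑' k, a k = 1) : Summable a := by
  by_contra hn
  rw [tsum_eq_zero_of_not_summable hn] at h
  exact zero_ne_one h

lemma pow_sub_pow_le_mul_sub {a b : ℝ} (ha : 0 ≤ a) (hab : a ≤ b) (hb : b ≤ 1) (k : ℕ) :
    b ^ k - a ^ k ≤ k * (b - a) := by
  induction k with
  | zero => simp
  | succ k ih =>
    have h1 : a ^ k ≤ 1 := pow_le_one₀ ha (hab.trans hb)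
    have h2 : a ^ k ≤ b ^ k := pow_le_pow_left₀ ha hab k
    push_cast
    rw [pow_succ, pow_succ]
    nlinarith [mul_nonneg (sub_nonneg.2 h2) (sub_nonneg.2 hb),
      mul_nonneg (sub_nonneg.2 h1) (sub_nonneg.2 hab)]

lemma one_sub_pow_lt_mul_one_sub {a : ℝ} (ha : 0 ≤ a) (ha1 : a < 1) {k : ℕ} (hk : 2 ≤ k) :
    1 - a ^ k < k * (1 - a) := by
  obtain ⟨j, rfl⟩ := Nat.exists_eq_add_of_le' hk
  have h := pow_sub_pow_le_mul_sub ha ha1.le le_rfl (j + 1)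
  have h1 : a ^ (j + 1) < 1 := pow_lt_one₀ ha ha1 (by omega)
  rw [one_pow] at h
  push_cast at h ⊢
  rw [pow_succ a (j + 1)]
  nlinarith [mul_pos (sub_pos.2 h1) (sub_pos.2 ha1)]

/-- The generating function of a critical offspring distribution, divided by its argument, is
strictly decreasing on `(0, 1]`. -/
lemma mul_genFun_lt_mul_genFun {p : ℕ → ℝ} (hp : ∀ k, 0 ≤ p k) (hsum : ∑' k, p k = 1)
    (hcrit : ∑' k : ℕ, (k : ℝ) * p k = 1) (hp1 : p 1 < 1) {a b : ℝ} (ha : 0 < a) (hab : a < b)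
    (hb : b ≤ 1) : a * genFun p b < b * genFun p a := by
  have hs := summable_of_tsum_eq_one_s10 hsum
  have hsc := summable_of_tsum_eq_one_s10 hcrit
  have key : ∀ t ∈ Icc (0 : ℝ) 1,
      HasSum (fun k : ℕ => p k * (t ^ k - 1 + k * (1 - t))) (genFun p t - t) := by
    intro t ht
    have h := ((summable_mul_pow_s10 hp hs ht).hasSum.sub hs.hasSum).add
      (hsc.hasSum.mul_right (1 - t))
    rw [hsum, hcrit] at h
    rw [show genFun p t - t = genFun p t - 1 + 1 * (1 - t) by ring]
    refine (congrArg (HasSum · _) (funext fun k => ?_)).mp h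
    ring
  have hA := key a ⟨ha.le, hab.le.trans hb⟩
  have hB := key b ⟨ha.le.trans hab.le, hb⟩
  have hle : genFun p b - b ≤ genFun p a - a := by
    refine hasSum_le (fun k => mul_le_mul_of_nonneg_left ?_ (hp k)) hB hA
    linarith [pow_sub_pow_le_mul_sub ha.le hab.le hb k]
  have hB0 : 0 ≤ genFun p b - b := by
    refine hB.nonneg fun k => mul_nonneg (hp k) ?_
    have := pow_sub_pow_le_mul_sub (ha.le.trans hab.le) hb le_rfl k
    rw [one_pow] at this
    linarith
  obtain ⟨k, hk, hpk⟩ : ∃ k, 2 ≤ k ∧ 0 < p k := by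
    by_contra! h
    have h0 : ∀ k : ℕ, k ≠ 1 → (k : ℝ) * p k = 0 := by
      intro k hk
      rcases Nat.lt_or_ge k 2 with h2 | h2
      · obtain rfl : k = 0 := by omega
        simp
      · simp [le_antisymm (h k h2) (hp k)]
    rw [tsum_eq_single 1 h0] at hcrit
    norm_num at hcrit
    linarith
  have hA0 : 0 < genFun p a - a := by
    have hnn : ∀ k : ℕ, 0 ≤ p k * (a ^ k - 1 + k * (1 - a)) := fun k => by
      refine mul_nonneg (hp k) ?_
      have := pow_sub_pow_le_mul_sub ha.le (hab.le.trans hb) le_rfl k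
      rw [one_pow] at this
      linarith
    rw [← hA.tsum_eq]
    refine hA.summable.tsum_pos hnn k (mul_pos hpk ?_)
    linarith [one_sub_pow_lt_mul_one_sub ha.le (hab.trans_le hb) hk]
  nlinarith [mul_pos (sub_pos.2 hab) hA0, mul_nonneg ha.le (sub_nonneg.2 hle)]

lemma genFun_mem_Ioo {q : ℕ → ℝ} (hq : ∀ n, 0 ≤ q n) (hq0 : q 0 = 0) (hsum : ∑' n, q n = 1)
    {z : ℝ} (hz : z ∈ Ioo (0 : ℝ) 1) : genFun q z ∈ Ioo (0 : ℝ) 1 := by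
  have hs := summable_of_tsum_eq_one_s10 hsum
  have hsz := summable_mul_pow_s10 hq hs ⟨hz.1.le, hz.2.le⟩
  constructor
  · obtain ⟨n, hn⟩ : ∃ n, q n ≠ 0 := by
      by_contra! h
      simp [h] at hsum
    exact hsz.tsum_pos (fun n => mul_nonneg (hq n) (pow_nonneg hz.1.le n)) n
      (mul_pos ((hq n).lt_of_ne' hn) (pow_pos hz.1 n))
  · have : genFun q z ≤ ∑' n, q n * z := by
      refine hsz.tsum_le_tsum (fun n => ?_) (hs.mul_right z)
      rcases n with _ | n
      · simp [hq0]
      · exact mul_le_mul_of_nonneg_left (pow_le_of_le_one hz.1.le hz.2.le (by omega)) (hq _)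
    rw [tsum_mul_right, hsum, one_mul] at this
    exact this.trans_lt hz.2

lemma exists_genFun_eq {q : ℕ → ℝ} (hq : ∀ n, 0 ≤ q n) (hq0 : q 0 = 0) (hsum : ∑' n, q n = 1)
    {t : ℝ} (ht : t ∈ Ioo (0 : ℝ) 1) : ∃ z ∈ Ioo (0 : ℝ) 1, genFun q z = t := by
  have h0 : genFun q 0 = 0 := by
    rw [genFun, tsum_eq_single 0 (fun n hn => by simp [hn])]
    simp [hq0]
  have h1 : genFun q 1 = 1 := by simpa [genFun] using hsum
  have := intermediate_value_Ioo zero_le_one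
    (continuousOn_genFun hq (summable_of_tsum_eq_one_s10 hsum))
  rw [h0, h1] at this
  exact this ht

lemma le_iff_and_lt_iff_of_mul_eq {p : ℕ → ℝ} (hp : ∀ k, 0 ≤ p k) (hsum : ∑' k, p k = 1)
    (hcrit : ∑' k : ℕ, (k : ℝ) * p k = 1) (hp1 : p 1 < 1) {y z t : ℝ} (hz : 0 < z)
    (hy : y ∈ Ioo (0 : ℝ) 1) (ht : t ∈ Ioo (0 : ℝ) 1) (h : y = z * genFun p y) :
    (y ≤ t ↔ z * genFun p t ≤ t) ∧ (y < t ↔ z * genFun p t < t) := by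
  rcases lt_trichotomy y t with hlt | rfl | hlt
  · have h1 : z * genFun p t < t := by
      have := mul_lt_mul_of_pos_left
        (mul_genFun_lt_mul_genFun hp hsum hcrit hp1 hy.1 hlt ht.2.le) hz
      refine lt_of_mul_lt_mul_left ?_ hy.1.le
      linear_combination this - t * h
    simp [hlt, hlt.le, h1, h1.le]
  · simp [← h]
  · have h1 : t < z * genFun p t := by
      have := mul_lt_mul_of_pos_left
        (mul_genFun_lt_mul_genFun hp hsum hcrit hp1 ht.1 hlt hy.2.le) hz
      refine lt_of_mul_lt_mul_left ?_ hy.1.le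
      linear_combination this + t * h
    simp [hlt.not_ge, hlt.not_gt, h1.not_ge, h1.not_gt]

/-- Comparison of offspring generating functions is equivalent to comparison of the corresponding
tree-size generating functions. -/
lemma genFun_offspring_lt_iff {p₁ p₂ q₁ q₂ : ℕ → ℝ}
    (hp₁ : ∀ k, 0 ≤ p₁ k) (hpsum₁ : ∑' k, p₁ k = 1)
    (hcrit₁ : ∑' k : ℕ, (k : ℝ) * p₁ k = 1) (hp₁1 : p₁ 1 < 1)
    (hq₁0 : q₁ 0 = 0) (hq₂0 : q₂ 0 = 0)
    (hq₁nn : ∀ n, 0 ≤ q₁ n) (hq₂nn : ∀ n, 0 ≤ q₂ n)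
    (hq₁sum : ∑' n, q₁ n = 1) (hq₂sum : ∑' n, q₂ n = 1)
    (hfix₁ : ∀ z ∈ Icc (0 : ℝ) 1, genFun q₁ z = z * genFun p₁ (genFun q₁ z))
    (hfix₂ : ∀ z ∈ Icc (0 : ℝ) 1, genFun q₂ z = z * genFun p₂ (genFun q₂ z)) :
    ((∀ t ∈ Ioo (0 : ℝ) 1, genFun p₁ t ≤ genFun p₂ t) ∧
        ∃ t ∈ Ioo (0 : ℝ) 1, genFun p₁ t < genFun p₂ t) ↔
      ((∀ z ∈ Ioo (0 : ℝ) 1, genFun q₁ z ≤ genFun q₂ z) ∧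
        ∃ z ∈ Ioo (0 : ℝ) 1, genFun q₁ z < genFun q₂ z) := by
  have key : ∀ z ∈ Ioo (0 : ℝ) 1,
      (genFun q₁ z ≤ genFun q₂ z ↔ genFun p₁ (genFun q₂ z) ≤ genFun p₂ (genFun q₂ z)) ∧
      (genFun q₁ z < genFun q₂ z ↔ genFun p₁ (genFun q₂ z) < genFun p₂ (genFun q₂ z)) := by
    intro z hz
    have h := le_iff_and_lt_iff_of_mul_eq hp₁ hpsum₁ hcrit₁ hp₁1 hz.1
      (genFun_mem_Ioo hq₁nn hq₁0 hq₁sum hz) (genFun_mem_Ioo hq₂nn hq₂0 hq₂sum hz)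
      (hfix₁ z ⟨hz.1.le, hz.2.le⟩)
    have h2 := hfix₂ z ⟨hz.1.le, hz.2.le⟩
    rw [h.1, h.2]
    generalize genFun q₂ z = y at h2
    constructor
    · rw [← mul_le_mul_iff_right₀ (b := genFun p₁ y) hz.1, ← h2]
    · rw [← mul_lt_mul_iff_right₀ (b := genFun p₁ y) hz.1, ← h2]
  constructor
  · rintro ⟨hle, t, ht, hlt⟩
    refine ⟨fun z hz => (key z hz).1.2 (hle _ (genFun_mem_Ioo hq₂nn hq₂0 hq₂sum hz)), ?_⟩
    obtain ⟨z, hz, rfl⟩ := exists_genFun_eq hq₂nn hq₂0 hq₂sum ht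
    exact ⟨z, hz, (key z hz).2.2 hlt⟩
  · rintro ⟨hle, z, hz, hlt⟩
    refine ⟨fun t ht => ?_, _, genFun_mem_Ioo hq₂nn hq₂0 hq₂sum hz, (key z hz).2.1 hlt⟩
    obtain ⟨z, hz, rfl⟩ := exists_genFun_eq hq₂nn hq₂0 hq₂sum ht
    exact (key z hz).1.1 (hle z hz)

lemma mul_exp_neg_pow (q : ℕ → ℝ) (s : ℝ) (n : ℕ) :
    Real.exp s * (q n * Real.exp (-s) ^ n) = q n * Real.exp (-((n - 1) * s)) := by
  rw [← Real.exp_nat_mul, mul_left_comm, ← Real.exp_add]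
  ring_nf

lemma exp_mul_genFun (q : ℕ → ℝ) (s : ℝ) :
    Real.exp s * genFun q (Real.exp (-s)) = ∑' n : ℕ, q n * Real.exp (-((n - 1) * s)) := by
  rw [genFun, ← tsum_mul_left]
  simp_rw [mul_exp_neg_pow]

lemma one_le_cast_of_apply_ne_zero {q : ℕ → ℝ} (hq0 : q 0 = 0) {n : ℕ} (hn : q n ≠ 0) :
    (1 : ℝ) ≤ n :=
  Nat.one_le_cast.2 (Nat.one_le_iff_ne_zero.2 fun h => hn (by rw [h, hq0]))

lemma exp_mul_genFun_mem_Icc {q : ℕ → ℝ} (hq : ∀ n, 0 ≤ q n) (hq0 : q 0 = 0)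
    (hsum : ∑' n, q n = 1) {s : ℝ} (hs : 0 < s) :
    Real.exp s * genFun q (Real.exp (-s)) ∈ Icc (0 : ℝ) 1 := by
  have hu : ∀ n : ℕ, q n ≠ 0 → Real.exp (-((n - 1) * s)) ∈ Icc (0 : ℝ) 1 := fun n hn => by
    refine ⟨(Real.exp_pos _).le, Real.exp_le_one_iff.2 ?_⟩
    have := one_le_cast_of_apply_ne_zero hq0 hn
    nlinarith
  have hS := summable_of_tsum_eq_one_s10 hsum
  rw [exp_mul_genFun]
  refine ⟨tsum_nonneg fun n => mul_nonneg (hq n) (Real.exp_pos _).le, ?_⟩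
  refine le_of_le_of_eq ?_ hsum
  refine (summable_mul_of_mem_Icc hq hS hu).tsum_le_tsum (fun n => ?_) hS
  by_cases h : q n = 0
  · simp [h]
  · exact mul_le_of_le_one_right (hq n) (hu n h).2

lemma continuousOn_exp_mul_genFun {q : ℕ → ℝ} (hq : ∀ n, 0 ≤ q n) (hs : Summable q) :
    ContinuousOn (fun s => Real.exp s * genFun q (Real.exp (-s))) (Ioi 0) := by
  refine Real.continuous_exp.continuousOn.mul ((continuousOn_genFun hq hs).comp
    (by fun_prop) fun s hs => ⟨(Real.exp_pos _).le, Real.exp_le_one_iff.2 ?_⟩)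
  linarith [mem_Ioi.1 hs]

lemma integrableOn_rpow_mul_exp {a t : ℝ} (ha : 0 < a) (ht : 0 < t) :
    IntegrableOn (fun s => s ^ (a - 1) * Real.exp (-(t * s))) (Ioi 0) := by
  simpa using integrableOn_rpow_mul_exp_neg_mul_rpow (p := 1) (by linarith : -1 < a - 1)
    zero_lt_one ht

lemma integrableOn_laplace_genFun {q : ℕ → ℝ} (hq : ∀ n, 0 ≤ q n) (hq0 : q 0 = 0)
    (hsum : ∑' n, q n = 1) {a t : ℝ} (ha : 0 < a) (ht : 0 < t) :
    IntegrableOn (fun s => Real.exp s * genFun q (Real.exp (-s)) *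
      (s ^ (a - 1) * Real.exp (-(t * s)))) (Ioi 0) := by
  refine Integrable.bdd_mul (c := 1) (integrableOn_rpow_mul_exp ha ht)
    ((continuousOn_exp_mul_genFun hq (summable_of_tsum_eq_one_s10 hsum)).aestronglyMeasurable
      measurableSet_Ioi) ?_
  filter_upwards [ae_restrict_mem measurableSet_Ioi] with s hs
  have := exp_mul_genFun_mem_Icc hq hq0 hsum (mem_Ioi.1 hs)
  rw [Real.norm_of_nonneg this.1]
  exact this.2

/-- The negative moments of a tree size as a weighted Laplace transform of its generating
function. -/
lemma tsum_mul_rpow_neg_mul_Gamma {q : ℕ → ℝ} (hq : ∀ n, 0 ≤ q n) (hq0 : q 0 = 0)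
    (hsum : ∑' n, q n = 1) {a t : ℝ} (ha : 0 < a) (ht : 0 < t) :
    (∑' n : ℕ, q n * ((n : ℝ) - 1 + t) ^ (-a)) * Real.Gamma a =
      ∫ s in Ioi 0, Real.exp s * genFun q (Real.exp (-s)) *
        (s ^ (a - 1) * Real.exp (-(t * s))) := by
  have hS := summable_of_tsum_eq_one_s10 hsum
  have hn : ∀ n, q n ≠ 0 → t ≤ (n : ℝ) - 1 + t := fun n hn => by
    have := one_le_cast_of_apply_ne_zero hq0 hn
    linarith
  set F : ℕ → ℝ → ℝ := fun n s => q n * (s ^ (a - 1) * Real.exp (-(((n : ℝ) - 1 + t) * s)))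
  have hint : ∀ n, IntegrableOn (F n) (Ioi 0) := fun n => by
    by_cases h : q n = 0
    · simp [F, h]
    · exact (integrableOn_rpow_mul_exp ha (ht.trans_le (hn n h))).const_mul _
  have hval : ∀ n, ∫ s in Ioi 0, F n s =
      q n * ((n : ℝ) - 1 + t) ^ (-a) * Real.Gamma a := fun n => by
    by_cases h : q n = 0
    · simp [F, h]
    · have h0 := ht.trans_le (hn n h)
      rw [integral_const_mul, Real.integral_rpow_mul_exp_neg_mul_Ioi ha h0, one_div,
        Real.inv_rpow h0.le, Real.rpow_neg h0.le, mul_assoc]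
  have hnorm : ∀ n, ∫ s in Ioi 0, ‖F n s‖ = ∫ s in Ioi 0, F n s := fun n => by
    refine setIntegral_congr_fun measurableSet_Ioi fun s hs => Real.norm_of_nonneg ?_
    exact mul_nonneg (hq n) (mul_nonneg (Real.rpow_nonneg (mem_Ioi.1 hs).le _)
      (Real.exp_pos _).le)
  have hsumm : Summable fun n => ∫ s in Ioi 0, ‖F n s‖ := by
    simp_rw [hnorm, hval]
    refine Summable.mul_right _ (Summable.of_norm_bounded (hS.mul_right (t ^ (-a))) fun n => ?_)
    by_cases h : q n = 0
    · simp [h]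
    · rw [Real.norm_of_nonneg (mul_nonneg (hq n)
        (Real.rpow_nonneg (ht.le.trans (hn n h)) _))]
      exact mul_le_mul_of_nonneg_left
        (Real.rpow_le_rpow_of_nonpos ht (hn n h) (by linarith)) (hq n)
  have hmain := (hasSum_integral_of_summable_integral_norm hint hsumm).tsum_eq
  simp_rw [hval] at hmain
  rw [← tsum_mul_right, hmain]
  congr 1
  ext s
  rw [exp_mul_genFun, ← tsum_mul_right]
  congr 1
  ext n
  simp only [F]
  rw [mul_assoc, mul_left_comm (Real.exp _), ← Real.exp_add]
  ring_nf

/-- Post–Widder inversion: suitably scaled negative moments recover the generating function. -/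
lemma tendsto_rpow_mul_tsum_rpow_neg {q : ℕ → ℝ} (hq : ∀ n, 0 ≤ q n) (hq0 : q 0 = 0)
    (hsum : ∑' n, q n = 1) {s : ℝ} (hs : 0 < s) :
    Tendsto (fun m : ℕ => (m / s) ^ m * ∑' n : ℕ, q n * ((n : ℝ) - 1 + m / s) ^ (-(m : ℝ)))
      atTop (𝓝 (Real.exp s * genFun q (Real.exp (-s)))) := by
  have hn : ∀ n, q n ≠ 0 → 0 ≤ (n : ℝ) - 1 := fun n hn => by
    have := one_le_cast_of_apply_ne_zero hq0 hn
    linarith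
  have hlim : Tendsto (fun m : ℕ => ∑' n : ℕ, q n * ((1 + (n - 1) * s / m) ^ m)⁻¹)
      atTop (𝓝 (∑' n : ℕ, q n * Real.exp (-((n - 1) * s)))) := by
    refine tendsto_tsum_of_dominated_convergence (summable_of_tsum_eq_one_s10 hsum)
      (fun n => ?_) (Eventually.of_forall fun m n => ?_)
    · rw [Real.exp_neg]
      exact ((Real.tendsto_one_add_div_pow_exp _).inv₀ (Real.exp_pos _).ne').const_mul _
    · by_cases h : q n = 0
      · simp [h]
      · have h1 : 1 ≤ (1 + ((n : ℝ) - 1) * s / m) ^ m := by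
          have := hn n h
          exact one_le_pow₀ (le_add_of_nonneg_right (by positivity))
        rw [Real.norm_of_nonneg (mul_nonneg (hq n) (by positivity))]
        exact mul_le_of_le_one_right (hq n) (inv_le_one_of_one_le₀ h1)
  rw [exp_mul_genFun]
  refine hlim.congr' ?_
  filter_upwards [eventually_ge_atTop 1] with m hm
  have hm0 : (0 : ℝ) < m := by exact_mod_cast hm
  rw [← tsum_mul_left]
  congr 1
  ext n
  by_cases h : q n = 0
  · simp [h]
  · have := hn n h
    have h1 : (n : ℝ) - 1 + m / s = (m / s) * (1 + (n - 1) * s / m) := by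
      field_simp
      ring
    rw [Real.rpow_neg (by positivity), Real.rpow_natCast, h1, mul_pow, mul_inv]
    have : ((m : ℝ) / s) ^ m ≠ 0 := by positivity
    field_simp

lemma forall_exp_neg_iff {P : ℝ → Prop} :
    (∀ s : ℝ, 0 < s → P (Real.exp (-s))) ↔ ∀ z ∈ Ioo (0 : ℝ) 1, P z := by
  constructor
  · intro h z hz
    simpa [Real.exp_log hz.1] using h (-Real.log z) (neg_pos.2 (Real.log_neg hz.1 hz.2))
  · exact fun h s hs => h _ ⟨Real.exp_pos _, by simpa using hs⟩

/-- Strict comparison of all negative moments of tree sizes is equivalent to comparison of the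
tree-size generating functions. -/
lemma negMoment_lt_iff_genFun {q₁ q₂ : ℕ → ℝ} (hq₁0 : q₁ 0 = 0) (hq₂0 : q₂ 0 = 0)
    (hq₁nn : ∀ n, 0 ≤ q₁ n) (hq₂nn : ∀ n, 0 ≤ q₂ n)
    (hq₁sum : ∑' n, q₁ n = 1) (hq₂sum : ∑' n, q₂ n = 1) :
    (∀ m : ℕ, 1 ≤ m → ∀ t : ℝ, 0 < t →
        (∑' n : ℕ, q₁ n * ((n : ℝ) - 1 + t) ^ (-(m : ℝ))) <
          ∑' n : ℕ, q₂ n * ((n : ℝ) - 1 + t) ^ (-(m : ℝ))) ↔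
      ((∀ z ∈ Ioo (0 : ℝ) 1, genFun q₁ z ≤ genFun q₂ z) ∧
        ∃ z ∈ Ioo (0 : ℝ) 1, genFun q₁ z < genFun q₂ z) := by
  constructor
  · intro H
    have hle : ∀ z ∈ Ioo (0 : ℝ) 1, genFun q₁ z ≤ genFun q₂ z := by
      refine forall_exp_neg_iff.1 fun s hs => ?_
      refine le_of_mul_le_mul_left ?_ (Real.exp_pos s)
      refine le_of_tendsto_of_tendsto (tendsto_rpow_mul_tsum_rpow_neg hq₁nn hq₁0 hq₁sum hs)
        (tendsto_rpow_mul_tsum_rpow_neg hq₂nn hq₂0 hq₂sum hs) ?_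
      filter_upwards [eventually_ge_atTop 1] with m hm
      have hm0 : (0 : ℝ) < m := by exact_mod_cast hm
      exact mul_le_mul_of_nonneg_left (H m hm _ (by positivity)).le (by positivity)
    refine ⟨hle, ?_⟩
    by_contra! hge
    have heq : ∀ s : ℝ, 0 < s → genFun q₁ (Real.exp (-s)) = genFun q₂ (Real.exp (-s)) :=
      (forall_exp_neg_iff (P := fun z => genFun q₁ z = genFun q₂ z)).2
        fun z hz => le_antisymm (hle z hz) (hge z hz)
    have h1 := tsum_mul_rpow_neg_mul_Gamma hq₁nn hq₁0 hq₁sum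
      (Nat.cast_pos.2 one_pos : (0 : ℝ) < (1 : ℕ)) one_pos
    have h2 := tsum_mul_rpow_neg_mul_Gamma hq₂nn hq₂0 hq₂sum
      (Nat.cast_pos.2 one_pos : (0 : ℝ) < (1 : ℕ)) one_pos
    rw [setIntegral_congr_fun measurableSet_Ioi fun s hs => by
      simp only [heq s hs]; rfl, ← h2] at h1
    exact (H 1 le_rfl 1 one_pos).ne
      (mul_right_cancel₀ (Real.Gamma_pos_of_pos (by simp)).ne' h1)
  · rintro ⟨hle, z, hz, hlt⟩ m hm t ht
    have hm0 : (0 : ℝ) < m := by exact_mod_cast hm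
    have hle' := forall_exp_neg_iff.2 hle
    refine lt_of_mul_lt_mul_right ?_ (Real.Gamma_pos_of_pos hm0).le
    have hi₁ := integrableOn_laplace_genFun hq₁nn hq₁0 hq₁sum hm0 ht
    have hi₂ := integrableOn_laplace_genFun hq₂nn hq₂0 hq₂sum hm0 ht
    rw [tsum_mul_rpow_neg_mul_Gamma hq₁nn hq₁0 hq₁sum hm0 ht,
      tsum_mul_rpow_neg_mul_Gamma hq₂nn hq₂0 hq₂sum hm0 ht, ← sub_pos, ← integral_sub hi₂ hi₁]
    refine (setIntegral_pos_iff_support_of_nonneg_ae ?_ (hi₂.sub hi₁)).2 ?_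
    rotate_left
    · set D : ℝ → ℝ := fun s => Real.exp s * genFun q₂ (Real.exp (-s)) -
        Real.exp s * genFun q₁ (Real.exp (-s))
      have hD : ContinuousOn D (Ioi 0) :=
        (continuousOn_exp_mul_genFun hq₂nn (summable_of_tsum_eq_one_s10 hq₂sum)).sub
          (continuousOn_exp_mul_genFun hq₁nn (summable_of_tsum_eq_one_s10 hq₁sum))
      have hopen := hD.isOpen_inter_preimage isOpen_Ioi (isOpen_Ioi (a := (0 : ℝ)))
      have hlog := neg_pos.2 (Real.log_neg hz.1 hz.2)
      refine (hopen.measure_pos volume ⟨_, hlog, ?_⟩).trans_le (measure_mono ?_)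
      · simp only [D, mem_preimage, mem_Ioi, neg_neg, Real.exp_log hz.1]
        rw [← mul_sub]
        exact mul_pos (Real.exp_pos _) (sub_pos.2 hlt)
      · rintro s ⟨hs, hDs⟩
        refine ⟨?_, hs⟩
        rw [Function.mem_support, Pi.sub_apply, ← sub_mul]
        exact (mul_pos hDs (mul_pos (Real.rpow_pos_of_pos hs _) (Real.exp_pos _))).ne'
    · filter_upwards [ae_restrict_mem measurableSet_Ioi] with s hs
      rw [Pi.zero_apply, Pi.sub_apply, ← sub_mul, ← mul_sub]
      exact mul_nonneg (mul_nonneg (Real.exp_pos _).le (sub_nonneg.2 (hle' s hs)))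
        (mul_nonneg (Real.rpow_nonneg (mem_Ioi.1 hs).le _) (Real.exp_pos _).le)


/-- Theorem 6.8 of the paper. For two critical offspring distributions
(each with `p 1 < 1`), the strict inequalities
`∑ q₁ₙ (n−1+t)^{−m} < ∑ q₂ₙ (n−1+t)^{−m}` hold for all integers `m ≥ 1` and all reals
`t > 0` iff `Φ₁ ≤ Φ₂` on `(0,1)` with strict inequality somewhere. -/
theorem stmt10
    (p₁ p₂ : ℕ → ℝ) (hp₁ : ∀ k, 0 ≤ p₁ k) (hp₂ : ∀ k, 0 ≤ p₂ k)
    (hpsum₁ : ∑' k, p₁ k = 1) (hpsum₂ : ∑' k, p₂ k = 1)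
    (hcrit₁ : ∑' k : ℕ, (k : ℝ) * p₁ k = 1) (hcrit₂ : ∑' k : ℕ, (k : ℝ) * p₂ k = 1)
    (hp₁1 : p₁ 1 < 1) (hp₂1 : p₂ 1 < 1)
    (q₁ q₂ : ℕ → ℝ)
    (hq₁0 : q₁ 0 = 0) (hq₂0 : q₂ 0 = 0)
    (hq₁nn : ∀ n, 0 ≤ q₁ n) (hq₂nn : ∀ n, 0 ≤ q₂ n)
    (hq₁sum : ∑' n, q₁ n = 1) (hq₂sum : ∑' n, q₂ n = 1)
    (hfix₁ : ∀ z ∈ Set.Icc (0:ℝ) 1,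
      (∑' n, q₁ n * z ^ n) = z * ∑' k, p₁ k * (∑' n, q₁ n * z ^ n) ^ k)
    (hfix₂ : ∀ z ∈ Set.Icc (0:ℝ) 1,
      (∑' n, q₂ n * z ^ n) = z * ∑' k, p₂ k * (∑' n, q₂ n * z ^ n) ^ k) :
    (∀ m : ℕ, 1 ≤ m → ∀ t : ℝ, 0 < t →
        (∑' n : ℕ, q₁ n * ((n : ℝ) - 1 + t) ^ (-(m : ℝ))) <
          ∑' n : ℕ, q₂ n * ((n : ℝ) - 1 + t) ^ (-(m : ℝ))) ↔
      ((∀ t ∈ Set.Ioo (0:ℝ) 1, (∑' k, p₁ k * t ^ k) ≤ ∑' k, p₂ k * t ^ k) ∧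
        ∃ t ∈ Set.Ioo (0:ℝ) 1, (∑' k, p₁ k * t ^ k) < ∑' k, p₂ k * t ^ k) := by
  exact (negMoment_lt_iff_genFun hq₁0 hq₂0 hq₁nn hq₂nn hq₁sum hq₂sum).trans
    (genFun_offspring_lt_iff hp₁ hpsum₁ hcrit₁ hp₁1 hq₁0 hq₂0 hq₁nn hq₂nn hq₁sum hq₂sum
      hfix₁ hfix₂).symm
end
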